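/- arXiv:1206.2233 — 9 statements merged into one kernel-verified Lean document; each statement's English description precedes it below -/
import Mathlib

section
/- Let ≤ be the horizontal-strip relation on partitions. Suppose α assigns to every chain ν ≤ μ ≤ λ of partitions an element α(ν,μ,λ) ∈ ℂ^× satisfying the 2-cocycle condition α(ν,μ,λ)·α(ρ,ν,λ) = α(ρ,μ,λ)·α(ρ,ν,μ) for every chain ρ ≤ ν ≤ μ ≤ λ. Then α is a coboundary: there is a function β assigning to every pair μ ≤ λ an element β(μ,λ) ∈ ℂ^× such that α(ν,μ,λ) = β(μ,λ)·β(ν,λ)^{−1}·β(ν,μ) for every chain ν ≤ μ ≤ λ. (Equivalently, the second cohomology of the nerve of the set of partitions with the horizontal-strip relation, with coefficients in ℂ^×, is trivial.) -/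
/-- `λ/μ` is a horizontal strip: `μ ⊆ λ` and `λ_{i+1} ≤ μ_i` for all i
(rows are 0-indexed, so `rowLen i` is the (i+1)-st part). -/
def YoungDiagram.IsHStrip (lam μ : YoungDiagram) : Prop :=
  μ ≤ lam ∧ ∀ i : ℕ, lam.rowLen (i + 1) ≤ μ.rowLen i

/-- `λ/μ` is a vertical strip: `μ ⊆ λ` and `λ_i − μ_i ≤ 1` for all i. -/
def YoungDiagram.IsVStrip (lam μ : YoungDiagram) : Prop :=
  μ ≤ lam ∧ ∀ i : ℕ, lam.rowLen i ≤ μ.rowLen i + 1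
/-- The horizontal-strip relation on partitions: `μ ≤ λ` iff `μ ⊆ λ` and λ/μ is a
horizontal strip. -/
def YoungDiagram.hsLE (μ lam : YoungDiagram) : Prop := lam.IsHStrip μ

namespace HSAux

theorem le_iff_row (μ l : YoungDiagram) : μ ≤ l ↔ ∀ i, μ.rowLen i ≤ l.rowLen i := by
  constructor
  · intro h i
    by_contra hlt
    push Not at hlt
    have h1 : (i, l.rowLen i) ∈ μ := YoungDiagram.mem_iff_lt_rowLen.2 hlt
    have h2 : (i, l.rowLen i) ∈ l := h h1
    exact lt_irrefl _ (YoungDiagram.mem_iff_lt_rowLen.1 h2)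
  · rintro h ⟨i, j⟩ hc
    have h1 : (i, j) ∈ μ := hc
    have := YoungDiagram.mem_iff_lt_rowLen.1 h1
    have h2 : (i, j) ∈ l := YoungDiagram.mem_iff_lt_rowLen.2 (lt_of_lt_of_le this (h i))
    exact h2

theorem hs_iff (μ l : YoungDiagram) :
    μ.hsLE l ↔ (∀ i, μ.rowLen i ≤ l.rowLen i) ∧ ∀ i, l.rowLen (i + 1) ≤ μ.rowLen i := by
  unfold YoungDiagram.hsLE YoungDiagram.IsHStrip
  rw [le_iff_row]

theorem row_ext {μ l : YoungDiagram} (h : ∀ i, μ.rowLen i = l.rowLen i) : μ = l :=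
  le_antisymm ((le_iff_row _ _).2 fun i => (h i).le) ((le_iff_row _ _).2 fun i => (h i).ge)

/-- Keep only the first `n` rows. -/
def trunc (n : ℕ) (l : YoungDiagram) : YoungDiagram where
  cells := l.cells.filter (fun c => c.1 < n)
  isLowerSet := by
    intro x y hyx hx
    simp only [Finset.coe_filter, Set.mem_setOf_eq] at hx ⊢
    exact ⟨l.isLowerSet hyx hx.1, lt_of_le_of_lt hyx.1 hx.2⟩

theorem mem_trunc (n : ℕ) (l : YoungDiagram) (i j : ℕ) :
    (i, j) ∈ trunc n l ↔ (i, j) ∈ l ∧ i < n := by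
  rw [← YoungDiagram.mem_cells, ← YoungDiagram.mem_cells]
  simp [trunc]

theorem trunc_row (n : ℕ) (l : YoungDiagram) (i : ℕ) :
    (trunc n l).rowLen i = if i < n then l.rowLen i else 0 := by
  have key : ∀ j, j < (trunc n l).rowLen i ↔ j < l.rowLen i ∧ i < n := by
    intro j
    rw [← YoungDiagram.mem_iff_lt_rowLen, ← YoungDiagram.mem_iff_lt_rowLen, mem_trunc]
  have k1 := key ((trunc n l).rowLen i)
  have k2 := key (l.rowLen i)
  have k3 := key 0
  have k4 := key ((trunc n l).rowLen i - 1)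
  split_ifs <;> omega

theorem trunc_eq {n : ℕ} {l : YoungDiagram} (h : l.rowLen n = 0) : trunc n l = l := by
  apply row_ext
  intro i
  rw [trunc_row]
  split_ifs with hi
  · rfl
  · have := l.rowLen_anti n i (by omega)
    omega

theorem trunc_zero_row (n : ℕ) (l : YoungDiagram) : (trunc n l).rowLen n = 0 := by
  simp [trunc_row]

theorem hs_refl (l : YoungDiagram) : l.hsLE l :=
  (hs_iff _ _).2 ⟨fun _ => le_rfl, fun i => l.rowLen_anti i (i + 1) (by omega)⟩

theorem hs_tt {μ l : YoungDiagram} (n : ℕ) (h : μ.hsLE l) : (trunc n μ).hsLE (trunc n l) := by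
  rw [hs_iff] at h ⊢
  simp only [trunc_row]
  refine ⟨fun i => ?_, fun i => ?_⟩
  · have := h.1 i
    split_ifs <;> omega
  · have := h.2 i
    split_ifs <;> omega

theorem hs_t {μ l : YoungDiagram} (n : ℕ) (hl : l.rowLen (n + 1) = 0) (h : μ.hsLE l) :
    (trunc n μ).hsLE l := by
  rw [hs_iff] at h ⊢
  simp only [trunc_row]
  refine ⟨fun i => ?_, fun i => ?_⟩
  · have := h.1 i
    split_ifs <;> omega
  · have := h.2 i
    split_ifs with hi
    · omega
    · have := l.rowLen_anti (n + 1) (i + 1) (by omega)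
      omega

variable {A : Type*} [AddCommGroup A]

/-- Recursive primitive on diagrams with at most `n` rows. -/
def B (a : YoungDiagram → YoungDiagram → YoungDiagram → A) : ℕ → YoungDiagram → YoungDiagram → A
  | 0, _, _ => 0
  | n + 1, μ, l => a (trunc n μ) μ l + B a n (trunc n μ) (trunc n l) - a (trunc n μ) (trunc n l) l

theorem B_cob (a : YoungDiagram → YoungDiagram → YoungDiagram → A)
    (hcoc : ∀ ρ ν μ lam : YoungDiagram,
      ρ.hsLE ν → ρ.hsLE μ → ρ.hsLE lam → ν.hsLE μ → ν.hsLE lam → μ.hsLE lam →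
        a ν μ lam + a ρ ν lam = a ρ μ lam + a ρ ν μ)
    (hd : ∀ μ, a μ μ μ = 0) (n : ℕ) :
    ∀ ν μ l : YoungDiagram, ν.rowLen n = 0 → μ.rowLen n = 0 → l.rowLen n = 0 →
      ν.hsLE μ → ν.hsLE l → μ.hsLE l → a ν μ l = B a n μ l - B a n ν l + B a n ν μ := by
  induction n with
  | zero =>
    intro ν μ l h1 h2 h3 _ _ _
    have e : ∀ x y : YoungDiagram, x.rowLen 0 = 0 → y.rowLen 0 = 0 → x = y := by
      intro x y hx hy
      apply row_ext
      intro i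
      have := x.rowLen_anti 0 i (by omega)
      have := y.rowLen_anti 0 i (by omega)
      omega
    rw [e μ ν h2 h1, e l ν h3 h1, hd]
    simp [B]
  | succ n ih =>
    intro ν μ l h1 h2 h3 hnm hnl hml
    have t := fun x => trunc_zero_row n x
    have i0 := ih _ _ _ (t ν) (t μ) (t l) (hs_tt n hnm) (hs_tt n hnl) (hs_tt n hml)
    have nn := hs_t n h1 (hs_refl ν)
    have mm := hs_t n h2 (hs_refl μ)
    have ll := hs_t n h3 (hs_refl l)
    have c1 := hcoc (trunc n ν) ν μ l nn (hs_t n h2 hnm) (hs_t n h3 hnl) hnm hnl hml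
    have c2 := hcoc (trunc n ν) (trunc n μ) μ l (hs_tt n hnm) (hs_t n h2 hnm) (hs_t n h3 hnl)
      mm (hs_t n h3 hml) hml
    have c3 := hcoc (trunc n ν) (trunc n μ) (trunc n l) l (hs_tt n hnm) (hs_tt n hnl)
      (hs_t n h3 hnl) (hs_tt n hml) (hs_t n h3 hml) ll
    simp only [B]
    linear_combination (norm := module) c1 - c2 + c3 + i0

theorem exists_b (a : YoungDiagram → YoungDiagram → YoungDiagram → A)
    (hcoc : ∀ ρ ν μ lam : YoungDiagram,
      ρ.hsLE ν → ρ.hsLE μ → ρ.hsLE lam → ν.hsLE μ → ν.hsLE lam → μ.hsLE lam →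
        a ν μ lam + a ρ ν lam = a ρ μ lam + a ρ ν μ)
    (hd : ∀ μ, a μ μ μ = 0) :
    ∃ b : YoungDiagram → YoungDiagram → A,
      ∀ ν μ l : YoungDiagram, ν.hsLE μ → ν.hsLE l → μ.hsLE l →
        a ν μ l = b μ l - b ν l + b ν μ := by
  have d1 : ∀ μ l, μ.hsLE l → a μ μ l = 0 := by
    intro μ l h
    have := hcoc μ μ μ l (hs_refl _) (hs_refl _) h (hs_refl _) h h
    rw [hd] at this
    simpa using this
  have d2 : ∀ μ l, μ.hsLE l → a μ l l = 0 := by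
    intro μ l h
    have := hcoc μ l l l h h h (hs_refl _) (hs_refl _) (hs_refl _)
    rw [hd] at this
    simpa using this
  have stab1 : ∀ n μ l, μ.rowLen n = 0 → l.rowLen n = 0 → μ.hsLE l →
      B a (n + 1) μ l = B a n μ l := by
    intro n μ l h1 h2 h
    simp only [B]
    rw [trunc_eq h1, trunc_eq h2, d1 _ _ h, d2 _ _ h]
    simp
  have mono : ∀ (x : YoungDiagram) m n, m ≤ n → x.rowLen m = 0 → x.rowLen n = 0 := by
    intro x m n h h0
    have := x.rowLen_anti m n h
    omega
  have stab : ∀ m n μ l, m ≤ n → μ.rowLen m = 0 → l.rowLen m = 0 → μ.hsLE l →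
      B a n μ l = B a m μ l := by
    intro m n μ l hmn h1 h2 h
    induction n, hmn using Nat.le_induction with
    | base => rfl
    | succ k hk ih => rw [stab1 k μ l (mono _ _ _ hk h1) (mono _ _ _ hk h2) h, ih]
  have zr : ∀ x : YoungDiagram, x.rowLen (x.colLen 0) = 0 := by
    intro x
    by_contra h
    have : (x.colLen 0, 0) ∈ x := YoungDiagram.mem_iff_lt_rowLen.2 (by omega)
    exact lt_irrefl _ (YoungDiagram.mem_iff_lt_colLen.1 this)
  refine ⟨fun μ l => B a (μ.colLen 0 + l.colLen 0) μ l, ?_⟩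
  intro ν μ l hnm hnl hml
  have z : ∀ (x : YoungDiagram) n, x.colLen 0 ≤ n → x.rowLen n = 0 := fun x n h => mono x _ _ h (zr x)
  have := B_cob a hcoc hd (ν.colLen 0 + μ.colLen 0 + l.colLen 0) ν μ l (z _ _ (by omega))
    (z _ _ (by omega)) (z _ _ (by omega)) hnm hnl hml
  rw [this]
  rw [stab (μ.colLen 0 + l.colLen 0) _ μ l (by omega) (z _ _ (by omega)) (z _ _ (by omega)) hml,
    stab (ν.colLen 0 + l.colLen 0) _ ν l (by omega) (z _ _ (by omega)) (z _ _ (by omega)) hnl,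
    stab (ν.colLen 0 + μ.colLen 0) _ ν μ (by omega) (z _ _ (by omega)) (z _ _ (by omega)) hnm]

theorem exists_b' (a : YoungDiagram → YoungDiagram → YoungDiagram → A)
    (hcoc : ∀ ρ ν μ lam : YoungDiagram,
      ρ.hsLE ν → ρ.hsLE μ → ρ.hsLE lam → ν.hsLE μ → ν.hsLE lam → μ.hsLE lam →
        a ν μ lam + a ρ ν lam = a ρ μ lam + a ρ ν μ) :
    ∃ b : YoungDiagram → YoungDiagram → A,
      ∀ ν μ l : YoungDiagram, ν.hsLE μ → ν.hsLE l → μ.hsLE l →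
        a ν μ l = b μ l - b ν l + b ν μ := by
  obtain ⟨b, hb⟩ := exists_b (fun ν μ l => a ν μ l - a μ μ μ) (by
    intro ρ ν μ l h1 h2 h3 h4 h5 h6
    have := hcoc ρ ν μ l h1 h2 h3 h4 h5 h6
    linear_combination (norm := module) this) (by simp)
  refine ⟨fun μ l => b μ l + a μ μ μ, ?_⟩
  intro ν μ l h1 h2 h3
  have := hb ν μ l h1 h2 h3
  linear_combination (norm := module) this

end HSAux

/-- Every 2-cocycle on the nerve of the set of partitions with the
horizontal-strip relation, with values in ℂ^×, is a coboundary: H² of the nerve is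
trivial. -/
theorem hstrip_nerve_H2_trivial
    (a : YoungDiagram → YoungDiagram → YoungDiagram → ℂˣ)
    (hcoc : ∀ ρ ν μ lam : YoungDiagram,
      ρ.hsLE ν → ρ.hsLE μ → ρ.hsLE lam → ν.hsLE μ → ν.hsLE lam → μ.hsLE lam →
        a ν μ lam * a ρ ν lam = a ρ μ lam * a ρ ν μ) :
    ∃ b : YoungDiagram → YoungDiagram → ℂˣ,
      ∀ ν μ lam : YoungDiagram, ν.hsLE μ → ν.hsLE lam → μ.hsLE lam →
        a ν μ lam = b μ lam * (b ν lam)⁻¹ * b ν μ := by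
  obtain ⟨b, hb⟩ := HSAux.exists_b' (A := Additive ℂˣ)
    (fun ν μ l => Additive.ofMul (a ν μ l)) (fun ρ ν μ l h1 h2 h3 h4 h5 h6 =>
      congrArg Additive.ofMul (hcoc ρ ν μ l h1 h2 h3 h4 h5 h6))
  refine ⟨fun μ l => (b μ l).toMul, fun ν μ l h1 h2 h3 => ?_⟩
  have := congrArg Additive.toMul (hb ν μ l h1 h2 h3)
  simpa [div_eq_mul_inv] using this
end

section
/- Let ≤ be the horizontal-strip relation on partitions. Suppose β assigns to every pair of partitions μ ≤ λ an element β(μ,λ) ∈ ℂ^× satisfying the 1-cocycle condition β(ν,λ) = β(μ,λ)·β(ν,μ) for every chain ν ≤ μ ≤ λ. Then there is a function γ from the set of all partitions to ℂ^× with β(μ,λ) = γ(λ)·γ(μ)^{−1} for all pairs μ ≤ λ. (Equivalently, the first cohomology of the nerve of the set of partitions with the horizontal-strip relation, with coefficients in ℂ^×, is trivial.) -/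
theorem YoungDiagram.shift_injOn (s : Set (ℕ × ℕ)) :
    Set.InjOn (fun c : ℕ × ℕ => (c.1 + 1, c.2)) s := by
  intro x _ y _ h
  simp only [Prod.mk.injEq, Nat.add_right_cancel_iff] at h
  exact Prod.ext h.1 h.2

/-- Remove the first row. -/
noncomputable def YoungDiagram.tailRow (l : YoungDiagram) : YoungDiagram where
  cells := l.cells.preimage (fun c => (c.1 + 1, c.2)) (YoungDiagram.shift_injOn _)
  isLowerSet := by
    intro x y h hx
    rw [Finset.mem_coe, Finset.mem_preimage] at hx ⊢
    refine l.isLowerSet ?_ hx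
    exact ⟨Nat.succ_le_succ h.1, h.2⟩

theorem YoungDiagram.mem_tailRow (l : YoungDiagram) (i j : ℕ) :
    (i, j) ∈ l.tailRow ↔ (i + 1, j) ∈ l := by
  rw [← YoungDiagram.mem_cells, ← YoungDiagram.mem_cells]
  exact Finset.mem_preimage (hf := YoungDiagram.shift_injOn _)

theorem YoungDiagram.rowLen_tailRow (l : YoungDiagram) (i : ℕ) :
    l.tailRow.rowLen i = l.rowLen (i + 1) := by
  apply eq_of_forall_lt_iff
  intro j
  rw [← YoungDiagram.mem_iff_lt_rowLen, ← YoungDiagram.mem_iff_lt_rowLen, mem_tailRow]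

theorem YoungDiagram.le_iff_rowLen (m l : YoungDiagram) :
    m ≤ l ↔ ∀ i, m.rowLen i ≤ l.rowLen i := by
  constructor
  · intro h i
    by_contra! hc
    have h1 : (i, l.rowLen i) ∈ m := YoungDiagram.mem_iff_lt_rowLen.2 hc
    have h2 : (i, l.rowLen i) ∈ l := h h1
    exact lt_irrefl _ (YoungDiagram.mem_iff_lt_rowLen.1 h2)
  · rintro h ⟨i, j⟩ hx
    exact YoungDiagram.mem_iff_lt_rowLen.2
      ((YoungDiagram.mem_iff_lt_rowLen.1 hx).trans_le (h i))

theorem YoungDiagram.hsLE_iff (m l : YoungDiagram) :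
    m.hsLE l ↔ ∀ i, m.rowLen i ≤ l.rowLen i ∧ l.rowLen (i + 1) ≤ m.rowLen i := by
  unfold YoungDiagram.hsLE YoungDiagram.IsHStrip
  rw [le_iff_rowLen, forall_and]

theorem YoungDiagram.card_tailRow_lt (l : YoungDiagram) (h : l ≠ ⊥) :
    l.tailRow.card < l.card := by
  apply Finset.card_lt_card
  have hle : l.tailRow ≤ l := by
    rw [le_iff_rowLen]
    intro i
    rw [rowLen_tailRow]
    exact l.rowLen_anti _ _ (Nat.le_succ i)
  have hne : l.tailRow ≠ l := by
    intro he
    apply h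
    have hr : ∀ i, l.rowLen (i + 1) = l.rowLen i := fun i => by
      rw [← rowLen_tailRow, he]
    have hr0 : ∀ i, l.rowLen i = l.rowLen 0 := fun i => by
      induction i with
      | zero => rfl
      | succ k ih => rw [hr, ih]
    by_contra hb
    have hz : l.rowLen (l.colLen 0) = 0 := by
      by_contra hp
      have h1 : (l.colLen 0, 0) ∈ l :=
        YoungDiagram.mem_iff_lt_rowLen.2 (Nat.pos_of_ne_zero hp)
      exact lt_irrefl _ (YoungDiagram.mem_iff_lt_colLen.1 h1)
    apply hb
    apply le_antisymm _ bot_le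
    rw [le_iff_rowLen]
    intro i
    rw [hr0, ← hr0 (l.colLen 0), hz]
    exact Nat.zero_le _
  exact YoungDiagram.cells_ssubset_iff.2 (lt_of_le_of_ne hle hne)

open Classical in
/-- The cochain trivialising `b`. -/
noncomputable def YoungDiagram.gam (b : YoungDiagram → YoungDiagram → ℂˣ)
    (l : YoungDiagram) : ℂˣ :=
  if h : l = ⊥ then 1 else b l.tailRow l * YoungDiagram.gam b l.tailRow
termination_by l.card
decreasing_by exact l.card_tailRow_lt h

theorem hstrip_nerve_H1_trivial
    (b : YoungDiagram → YoungDiagram → ℂˣ)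
    (hcoc : ∀ ν μ lam : YoungDiagram, ν.hsLE μ → ν.hsLE lam → μ.hsLE lam →
      b ν lam = b μ lam * b ν μ) :
    ∃ g : YoungDiagram → ℂˣ,
      ∀ μ lam : YoungDiagram, μ.hsLE lam → b μ lam = g lam * (g μ)⁻¹ := by
  have hrefl : ∀ l : YoungDiagram, l.hsLE l := fun l => by
    rw [YoungDiagram.hsLE_iff]
    exact fun i => ⟨le_rfl, l.rowLen_anti _ _ (Nat.le_succ i)⟩
  have hone : ∀ l, b l l = 1 := fun l => by
    have := hcoc l l l (hrefl l) (hrefl l) (hrefl l)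
    exact left_eq_mul.1 this
  have hbot : (⊥ : YoungDiagram).tailRow = ⊥ := by
    apply le_antisymm _ bot_le
    rintro ⟨i, j⟩ hx
    have := (YoungDiagram.mem_tailRow _ _ _).1 hx
    exact absurd this (YoungDiagram.notMem_bot _)
  have hg : ∀ l, YoungDiagram.gam b l = b l.tailRow l * YoungDiagram.gam b l.tailRow := by
    intro l
    by_cases h : l = ⊥
    · subst h
      rw [hbot, hone, one_mul]
    · rw [YoungDiagram.gam, dif_neg h]
  refine ⟨YoungDiagram.gam b, ?_⟩
  have key : ∀ n : ℕ, ∀ m l : YoungDiagram, l.card ≤ n → m.hsLE l →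
      b m l = YoungDiagram.gam b l * (YoungDiagram.gam b m)⁻¹ := by
    intro n
    induction n with
    | zero =>
      intro m l hc h
      have hl : l = ⊥ := by
        by_contra hne
        have := l.card_tailRow_lt hne
        omega
      subst hl
      have hm : m = ⊥ := le_antisymm h.1 bot_le
      subst hm
      rw [hone, mul_inv_cancel]
    | succ n ih =>
      intro m l hc h
      by_cases hl : l = ⊥
      · subst hl
        have hm : m = ⊥ := le_antisymm h.1 bot_le
        subst hm
        rw [hone, mul_inv_cancel]
      have hlt := l.card_tailRow_lt hl
      have h' := (YoungDiagram.hsLE_iff _ _).1 h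
      have tl : ∀ l : YoungDiagram, l.tailRow.hsLE l := fun l => by
        rw [YoungDiagram.hsLE_iff]
        intro i
        rw [YoungDiagram.rowLen_tailRow]
        exact ⟨l.rowLen_anti _ _ (Nat.le_succ i), le_rfl⟩
      have h1 : m.tailRow.hsLE l.tailRow := by
        rw [YoungDiagram.hsLE_iff]
        intro i
        simp only [YoungDiagram.rowLen_tailRow]
        exact h' (i + 1)
      have h2 : l.tailRow.hsLE m := by
        rw [YoungDiagram.hsLE_iff]
        intro i
        simp only [YoungDiagram.rowLen_tailRow]
        exact ⟨(h' i).2, (h' (i + 1)).1⟩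
      have e1 := hcoc _ _ _ h2 (tl l) h
      have e2 := hcoc _ _ _ h1 (tl m) h2
      have e3 := ih _ _ (by omega) h1
      rw [hg l, hg m, e1, e2, e3]
      simp only [mul_inv_rev, inv_inv]
      rw [eq_comm, mul_assoc, mul_assoc]
      apply mul_eq_left.2
      generalize YoungDiagram.gam b l.tailRow = x
      generalize YoungDiagram.gam b m.tailRow = y
      generalize b l.tailRow m = z
      group
  exact fun m l h => key _ m l le_rfl h
end

section
/- Fix a partition λ and let P be the set of partitions μ such that λ/μ is a vertical strip. Call a quadruple (μ, μ′, μ″, ν) of partitions a square if μ′ ≠ μ″, each of μ′ and μ″ is obtained from μ by removing a single box, ν is obtained from each of μ′ and μ″ by removing a single box, and μ/ν is a horizontal strip (of size 2). Then there exists a choice of signs s(μ, μ′) ∈ {±1}, one for each pair μ, μ′ ∈ P with μ′ obtained from μ by removing a single box, such that s(μ′,ν)·s(μ,μ′) = − s(μ″,ν)·s(μ,μ″) for every square (μ, μ′, μ″, ν) all of whose members lie in P. -/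
/-- `μ'` is obtained from `μ` by removing a single box. -/
def YoungDiagram.CoveredBy (μ μ' : YoungDiagram) : Prop :=
  μ' ≤ μ ∧ μ.card = μ'.card + 1

def vsCnt (A : Finset (ℕ × ℕ)) (b : ℕ × ℕ) : ℕ := (A.filter (fun c => toLex c < toLex b)).card

def vsSgn (A B : Finset (ℕ × ℕ)) : ℤ := (-1) ^ (∑ b ∈ A \ B, vsCnt A b)

lemma vsSgn_erase (A : Finset (ℕ × ℕ)) (b : ℕ × ℕ) (hb : b ∈ A) :
    vsSgn A (A.erase b) = (-1) ^ vsCnt A b := by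
  have : A \ A.erase b = {b} := by
    ext x; simp only [Finset.mem_sdiff, Finset.mem_erase, Finset.mem_singleton]; grind
  rw [vsSgn, this, Finset.sum_singleton]

lemma vsCnt_erase_of_not_lt (A : Finset (ℕ × ℕ)) (b c : ℕ × ℕ) (h : ¬ toLex c < toLex b) :
    vsCnt (A.erase c) b = vsCnt A b := by
  unfold vsCnt
  rw [Finset.filter_erase, Finset.erase_eq_of_notMem]
  simp [h]

lemma vsCnt_erase_of_lt (A : Finset (ℕ × ℕ)) (b c : ℕ × ℕ) (hc : c ∈ A)
    (h : toLex c < toLex b) :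
    vsCnt A b = vsCnt (A.erase c) b + 1 := by
  unfold vsCnt
  rw [Finset.filter_erase, Finset.card_erase_add_one]
  simp [h, hc]

lemma vs_anti (A : Finset (ℕ × ℕ)) (b c : ℕ × ℕ) (hb : b ∈ A) (hc : c ∈ A)
    (h : toLex b < toLex c) :
    vsSgn (A.erase b) ((A.erase b).erase c) * vsSgn A (A.erase b) =
      -(vsSgn (A.erase c) ((A.erase c).erase b) * vsSgn A (A.erase c)) := by
  have hne : b ≠ c := by rintro rfl; exact lt_irrefl _ h
  rw [vsSgn_erase _ _ hb, vsSgn_erase _ _ hc,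
    vsSgn_erase _ _ (Finset.mem_erase.2 ⟨hne.symm, hc⟩),
    vsSgn_erase _ _ (Finset.mem_erase.2 ⟨hne, hb⟩),
    vsCnt_erase_of_not_lt A b c h.not_gt, vsCnt_erase_of_lt A c b hb h]
  ring

lemma vs_cov (μ ν : YoungDiagram) (h : μ.CoveredBy ν) :
    ∃ b ∈ μ.cells, ν.cells = μ.cells.erase b := by
  obtain ⟨h1, h2⟩ := h
  have h1 : ν.cells ⊆ μ.cells := h1
  have h2 : μ.cells.card = ν.cells.card + 1 := h2
  obtain ⟨b, hb, hn⟩ := Finset.exists_mem_notMem_of_card_lt_card (by omega : ν.cells.card < μ.cells.card)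
  refine ⟨b, hb, Finset.eq_of_subset_of_card_le (Finset.subset_erase.2 ⟨h1, hn⟩) ?_⟩
  rw [Finset.card_erase_of_mem hb]; omega

/-- Fix a partition λ and let P be the set of partitions μ with λ/μ a
vertical strip.  There is a choice of signs s(μ,μ') for single-box removals within P such
that `s(μ',ν)·s(μ,μ') = − s(μ″,ν)·s(μ,μ″)` for every square (μ, μ', μ″, ν) inside P. -/
theorem vstrip_square_signs (lam : YoungDiagram) :
    ∃ s : YoungDiagram → YoungDiagram → ℤ,
      (∀ μ μ' : YoungDiagram, lam.IsVStrip μ → lam.IsVStrip μ' → μ.CoveredBy μ' →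
        s μ μ' = 1 ∨ s μ μ' = -1) ∧
      (∀ μ μ' μ'' ν : YoungDiagram,
        lam.IsVStrip μ → lam.IsVStrip μ' → lam.IsVStrip μ'' → lam.IsVStrip ν →
        μ' ≠ μ'' → μ.CoveredBy μ' → μ.CoveredBy μ'' →
        μ'.CoveredBy ν → μ''.CoveredBy ν → μ.IsHStrip ν →
        s μ' ν * s μ μ' = -(s μ'' ν * s μ μ'')) := by
  refine ⟨fun μ ν => vsSgn μ.cells ν.cells, fun μ ν _ _ _ => neg_one_pow_eq_or ℤ _, ?_⟩
  intro μ μ' μ'' ν _ _ _ _ hne h1 h2 h3 h4 _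
  obtain ⟨b, hb, e1⟩ := vs_cov _ _ h1
  obtain ⟨c, hc, e2⟩ := vs_cov _ _ h2
  obtain ⟨x, hx, e3⟩ := vs_cov _ _ h3
  obtain ⟨y, hy, e4⟩ := vs_cov _ _ h4
  have hbc : b ≠ c := by
    rintro rfl
    exact hne (YoungDiagram.ext (e1.trans e2.symm))
  rw [e1] at e3 hx
  rw [e2] at e4 hy
  have hxc : x = c := by
    by_contra hxc
    have : c ∈ ν.cells := by rw [e3]; simp [hc, hbc.symm, Ne.symm hxc]
    rw [e4] at this; simp at this
  have hyb : y = b := by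
    by_contra hyb
    have : b ∈ ν.cells := by rw [e4]; simp [hb, hbc, Ne.symm hyb]
    rw [e3] at this; simp at this
  subst hxc hyb
  have e5 := e3
  rw [Finset.erase_right_comm] at e5
  show vsSgn μ'.cells ν.cells * vsSgn μ.cells μ'.cells =
    -(vsSgn μ''.cells ν.cells * vsSgn μ.cells μ''.cells)
  rw [e1, e2]
  rcases lt_or_gt_of_ne (fun h => hbc (toLex.injective h) : toLex y ≠ toLex x) with h | h
  · have := vs_anti μ.cells y x hb hc h
    rw [← e3, ← e4] at this
    exact this
  · have := vs_anti μ.cells x y hc hb h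
    rw [← e3, ← e4] at this
    rw [this, neg_neg]
end

section
/- Let ≤ be the horizontal-strip relation on partitions: μ ≤ λ iff μ ⊆ λ and λ/μ is a horizontal strip. If f is a bijection from the set of all partitions to itself such that μ ≤ λ if and only if f(μ) ≤ f(λ), then f is the identity. In other words, the set of partitions equipped with the horizontal-strip relation has no nontrivial automorphisms. -/
theorem hsr_ext {A B : YoungDiagram} (h : ∀ i, A.rowLen i = B.rowLen i) : A = B := by
  apply YoungDiagram.ext
  ext ⟨i, j⟩
  rw [YoungDiagram.mem_cells, YoungDiagram.mem_cells, YoungDiagram.mem_iff_lt_rowLen,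
    YoungDiagram.mem_iff_lt_rowLen, h]

theorem hsr_le {A B : YoungDiagram} : A ≤ B ↔ ∀ i, A.rowLen i ≤ B.rowLen i := by
  constructor
  · intro h i
    by_contra! hc
    have h1 : (i, B.rowLen i) ∈ A := YoungDiagram.mem_iff_lt_rowLen.2 hc
    have h2 : (i, B.rowLen i) ∈ B := h h1
    exact lt_irrefl _ (YoungDiagram.mem_iff_lt_rowLen.1 h2)
  · rintro h ⟨i, j⟩ hx
    exact YoungDiagram.mem_iff_lt_rowLen.2
      (lt_of_lt_of_le (YoungDiagram.mem_iff_lt_rowLen.1 hx) (h i))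

theorem hsr_hs {A B : YoungDiagram} : A.hsLE B ↔
    (∀ i, A.rowLen i ≤ B.rowLen i) ∧ ∀ i, B.rowLen (i + 1) ≤ A.rowLen i := by
  unfold YoungDiagram.hsLE YoungDiagram.IsHStrip
  rw [hsr_le]

theorem hsr_exists (g : ℕ → ℕ) (hg : Antitone g) (N : ℕ) (hN : ∀ i, N ≤ i → g i = 0) :
    ∃ A : YoungDiagram, ∀ i, A.rowLen i = g i := by
  have key : ∀ i j, (i, j) ∈ ((Finset.range N ×ˢ Finset.range (g 0)).filter
      (fun p : ℕ × ℕ => p.2 < g p.1)) ↔ j < g i := by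
    intro i j
    simp only [Finset.mem_filter, Finset.mem_product, Finset.mem_range]
    refine ⟨fun h => h.2, fun h => ⟨⟨?_, lt_of_lt_of_le h (hg (Nat.zero_le i))⟩, h⟩⟩
    by_contra! hc
    rw [hN i hc] at h
    omega
  refine ⟨⟨(Finset.range N ×ˢ Finset.range (g 0)).filter
      (fun p : ℕ × ℕ => p.2 < g p.1), ?_⟩, ?_⟩
  · rintro ⟨i, j⟩ ⟨i', j'⟩ hle hm
    have hle' : i' ≤ i ∧ j' ≤ j := hle
    have hm' := (key i j).1 hm
    exact (key i' j').2 (lt_of_le_of_lt hle'.2 (lt_of_lt_of_le hm' (hg hle'.1)))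
  · intro i
    apply eq_of_forall_lt_iff
    intro j
    rw [← YoungDiagram.mem_iff_lt_rowLen]
    exact key i j

theorem hsr_zero (A : YoungDiagram) : ∃ N, ∀ i, N ≤ i → A.rowLen i = 0 := by
  refine ⟨A.colLen 0, fun i hi => ?_⟩
  by_contra hc
  have : (i, 0) ∈ A := YoungDiagram.mem_iff_lt_rowLen.2 (Nat.pos_of_ne_zero hc)
  have := YoungDiagram.mem_iff_lt_colLen.1 this
  omega

theorem hsr_anti (A : YoungDiagram) : Antitone A.rowLen :=
  fun _ _ h => A.rowLen_anti _ _ h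

theorem hsr_tail (A : YoungDiagram) : ∃ T : YoungDiagram, ∀ i, T.rowLen i = A.rowLen (i + 1) := by
  obtain ⟨N, hN⟩ := hsr_zero A
  exact hsr_exists (fun i => A.rowLen (i + 1)) (fun a b h => hsr_anti A (by omega)) N
    (fun i hi => hN _ (by omega))

theorem hsr_tail_hs {A T : YoungDiagram} (h : ∀ i, T.rowLen i = A.rowLen (i + 1)) : T.hsLE A := by
  rw [hsr_hs]
  refine ⟨fun i => ?_, fun i => (h i).ge⟩
  rw [h]
  exact hsr_anti A (by omega)

theorem hsr_step (k : ℕ) (A B : YoungDiagram) (hA : A.rowLen (k + 1) = 0)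
    (h : ∀ M : YoungDiagram, M.rowLen k = 0 → M.hsLE A → M.hsLE B) :
    (∀ i, B.rowLen (i + 1) ≤ A.rowLen (i + 1)) ∧ ∀ i, i < k → A.rowLen i ≤ B.rowLen i := by
  constructor
  · obtain ⟨T, hT⟩ := hsr_tail A
    have := hsr_hs.1 (h T (by rw [hT, hA]) (hsr_tail_hs hT))
    intro i
    rw [← hT i]
    exact this.2 i
  · obtain ⟨T, hT⟩ := hsr_exists (fun i => if i < k then A.rowLen i else 0)
      (by
        intro a b hab
        have := hsr_anti A hab
        dsimp only
        split_ifs <;> omega) k (by intro i hi; simp; omega)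
    have hTA : T.hsLE A := by
      rw [hsr_hs]
      refine ⟨fun i => ?_, fun i => ?_⟩
      · rw [hT]; split_ifs <;> omega
      · rw [hT]
        have h1 := hsr_anti A (Nat.le_succ i)
        split_ifs with hi
        · exact h1
        · have h2 := hsr_anti A (show k + 1 ≤ i + 1 by omega)
          omega
    have := hsr_hs.1 (h T (by rw [hT]; simp) hTA)
    intro i hi
    have h3 := this.1 i
    rw [hT, if_pos hi] at h3
    exact h3

/-- The set of partitions equipped with the horizontal-strip relation
has no nontrivial automorphisms: any bijection of the set of partitions preserving and
reflecting the horizontal-strip relation is the identity. -/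
theorem hstrip_relation_rigid (f : YoungDiagram → YoungDiagram)
    (hbij : Function.Bijective f)
    (hrel : ∀ μ lam : YoungDiagram, μ.hsLE lam ↔ (f μ).hsLE (f lam)) :
    f = id := by
  obtain ⟨E, hE⟩ := hsr_exists (fun _ => 0) (fun _ _ _ => le_rfl) 0 (fun _ _ => rfl)
  have hz : ∀ A : YoungDiagram, A.rowLen 0 = 0 → A = E := by
    intro A hA
    apply hsr_ext
    intro i
    have := hsr_anti A (Nat.zero_le i)
    rw [hE]; omega
  have hEA : ∀ A : YoungDiagram, E.hsLE A ↔ A.rowLen 1 = 0 := by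
    intro A
    rw [hsr_hs]
    simp only [hE]
    refine ⟨fun h => by have := h.2 0; simpa using this, fun h => ⟨fun i => Nat.zero_le _, fun i => ?_⟩⟩
    have := hsr_anti A (show 1 ≤ i + 1 by omega)
    omega
  have fE : f E = E := by
    obtain ⟨T, hT⟩ := hsr_tail (f E)
    obtain ⟨S, rfl⟩ := hbij.2 T
    have h1 := (hrel S E).2 (hsr_tail_hs hT)
    have h2 : S = E := by
      apply hz
      have := (hsr_hs.1 h1).1 0
      rw [hE] at this; omega
    subst h2
    have hc : ∀ i, (f S).rowLen i = (f S).rowLen 0 := by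
      intro i
      induction i with
      | zero => rfl
      | succ i ih => rw [← hT, ih]
    obtain ⟨N, hN⟩ := hsr_zero (f S)
    apply hz
    rw [← hc N, hN N le_rfl]
  have hrow : ∀ n : ℕ, ∃ R : YoungDiagram, R.rowLen 0 = n ∧ R.rowLen 1 = 0 := by
    intro n
    obtain ⟨R, hR⟩ := hsr_exists (fun i => if i = 0 then n else 0)
      (by intro a b hab; dsimp only; split_ifs <;> omega) 1 (by intro i hi; simp; omega)
    exact ⟨R, by simp [hR], by simp [hR]⟩
  have hrz : ∀ A : YoungDiagram, A.rowLen 1 = 0 → ∀ i, A.rowLen (i + 1) = 0 := by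
    intro A hA i
    have := hsr_anti A (show 1 ≤ i + 1 by omega)
    omega
  have hrle : ∀ A B : YoungDiagram, A.rowLen 1 = 0 → B.rowLen 1 = 0 →
      (A.hsLE B ↔ A.rowLen 0 ≤ B.rowLen 0) := by
    intro A B hA hB
    rw [hsr_hs]
    refine ⟨fun h => h.1 0, fun h => ⟨fun i => ?_, fun i => ?_⟩⟩
    · cases i with
      | zero => exact h
      | succ i => rw [hrz A hA]; omega
    · rw [hrz B hB]; omega
  have hreq : ∀ A B : YoungDiagram, A.rowLen 1 = 0 → B.rowLen 1 = 0 →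
      A.rowLen 0 = B.rowLen 0 → A = B := by
    intro A B hA hB h
    apply hsr_ext
    intro i
    cases i with
    | zero => exact h
    | succ i => rw [hrz A hA, hrz B hB]
  have hfr : ∀ A : YoungDiagram, A.rowLen 1 = 0 ↔ (f A).rowLen 1 = 0 := by
    intro A
    rw [← hEA, ← hEA, hrel, fE]
  choose R hR0 hR1 using hrow
  have base : ∀ n : ℕ, ∀ A : YoungDiagram, A.rowLen 1 = 0 → A.rowLen 0 = n → f A = A := by
    intro n
    induction n using Nat.strong_induction_on with
    | _ n ih =>
      intro A hA hn
      apply hreq _ _ ((hfr A).1 hA) hA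
      rcases lt_trichotomy ((f A).rowLen 0) (A.rowLen 0) with hlt | heq | hgt
      · have := ih _ (hn ▸ hlt) (f A) ((hfr A).1 hA) rfl
        have := hbij.1 this
        rw [this]
      · exact heq
      · exfalso
        obtain ⟨S, hS⟩ := hbij.2 A
        have hS1 : S.rowLen 1 = 0 := (hfr S).2 (by rw [hS]; exact hA)
        have h1 : S.hsLE A := by
          rw [hrel, hS, hrle _ _ hA ((hfr A).1 hA)]
          exact hgt.le
        rw [hrle _ _ hS1 hA] at h1
        rcases h1.lt_or_eq with h2 | h2
        · have h3 := ih _ (hn ▸ h2) S hS1 rfl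
          rw [hS] at h3
          rw [h3] at h2
          exact lt_irrefl _ h2
        · have h3 := hreq _ _ hS1 hA h2
          rw [h3] at hS
          rw [hS] at hgt
          exact lt_irrefl _ hgt
  have main : ∀ k : ℕ, ∀ A : YoungDiagram, A.rowLen (k + 1) = 0 → f A = A := by
    intro k
    induction k with
    | zero => exact fun A hA => base _ A hA rfl
    | succ k ih =>
      intro A hA
      have hM : ∀ M : YoungDiagram, M.rowLen (k + 1) = 0 → (M.hsLE A ↔ M.hsLE (f A)) := by
        intro M hM
        rw [hrel, ih M hM]
      have h1 := hsr_step (k + 1) A (f A) hA (fun M h => (hM M h).1)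
      have hfA : (f A).rowLen (k + 1 + 1) = 0 := by
        have := h1.1 (k + 1)
        omega
      have h2 := hsr_step (k + 1) (f A) A hfA (fun M h => (hM M h).2)
      apply hsr_ext
      intro i
      cases i with
      | zero => exact le_antisymm (h2.2 0 (by omega)) (h1.2 0 (by omega))
      | succ i => exact le_antisymm (h1.1 i) (h2.1 i)
  funext A
  obtain ⟨N, hN⟩ := hsr_zero A
  exact main N A (hN _ (by omega))
end

section
/- Fix a partition λ. The set of partitions μ such that λ/μ is a vertical strip, partially ordered by containment, is order-isomorphic to the product of finite chains ∏_{i ≥ 1} {0, 1, …, m_i(λ)} equipped with the componentwise order (all but finitely many factors are one-element chains). -/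
theorem vs_count (lam : YoungDiagram) (i : ℕ) :
    Multiset.count (i + 1) (lam.rowLens : Multiset ℕ) = lam.colLen i - lam.colLen (i + 1) := by
  have h1 : Multiset.count (i + 1) (lam.rowLens : Multiset ℕ)
      = ((Finset.range (lam.colLen 0)).filter (fun r => i + 1 = lam.rowLen r)).card := by
    have : (lam.rowLens : Multiset ℕ) = (Multiset.range (lam.colLen 0)).map lam.rowLen := rfl
    rw [this, Multiset.count_map]
    rfl
  rw [h1, ← Nat.card_Ico]
  congr 1
  ext r
  simp only [Finset.mem_filter, Finset.mem_range, Finset.mem_Ico]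
  have a0 := (YoungDiagram.mem_iff_lt_colLen (μ := lam) (i := r) (j := 0)).symm.trans
    YoungDiagram.mem_iff_lt_rowLen
  have a1 := (YoungDiagram.mem_iff_lt_colLen (μ := lam) (i := r) (j := i)).symm.trans
    YoungDiagram.mem_iff_lt_rowLen
  have a2 := (YoungDiagram.mem_iff_lt_colLen (μ := lam) (i := r) (j := i + 1)).symm.trans
    YoungDiagram.mem_iff_lt_rowLen
  omega

theorem vs_le_iff (a b : YoungDiagram) : a ≤ b ↔ ∀ j, a.colLen j ≤ b.colLen j := by
  constructor
  · intro h j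
    by_contra! hc
    have := h (YoungDiagram.mem_iff_lt_colLen.2 hc)
    exact absurd (YoungDiagram.mem_iff_lt_colLen.1 this) (lt_irrefl _)
  · rintro h ⟨i, j⟩ hx
    exact YoungDiagram.mem_iff_lt_colLen.2
      (lt_of_lt_of_le (YoungDiagram.mem_iff_lt_colLen.1 hx) (h j))

theorem vs_iff (lam μ : YoungDiagram) : lam.IsVStrip μ ↔
    ∀ j, lam.colLen (j + 1) ≤ μ.colLen j ∧ μ.colLen j ≤ lam.colLen j := by
  have key : (∀ i, lam.rowLen i ≤ μ.rowLen i + 1) ↔ ∀ j, lam.colLen (j + 1) ≤ μ.colLen j := by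
    have e1 := fun i j => (YoungDiagram.mem_iff_lt_colLen (μ := lam) (i := i) (j := j)).symm.trans
      YoungDiagram.mem_iff_lt_rowLen
    have e2 := fun i j => (YoungDiagram.mem_iff_lt_colLen (μ := μ) (i := i) (j := j)).symm.trans
      YoungDiagram.mem_iff_lt_rowLen
    constructor
    · intro h j
      by_contra! hc
      have h1 := e1 (μ.colLen j) (j + 1)
      have h2 := e2 (μ.colLen j) j
      have := h (μ.colLen j)
      omega
    · intro h i
      by_contra! hc
      have h1 := e1 i (μ.rowLen i + 1)
      have h2 := e2 i (μ.rowLen i)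
      have := h (μ.rowLen i)
      omega
  unfold YoungDiagram.IsVStrip
  rw [key, vs_le_iff, forall_and, and_comm]

theorem vs_exists (lam : YoungDiagram) (d : ℕ → ℕ) (hd : Antitone d)
    (hl : ∀ j, d j ≤ lam.colLen j) : ∃ μ : YoungDiagram, ∀ j, μ.colLen j = d j := by
  let μ : YoungDiagram :=
    { cells := lam.cells.filter (fun x => x.1 < d x.2)
      isLowerSet := by
        rintro ⟨a, b⟩ ⟨a', b'⟩ hle hx
        have hle1 : a' ≤ a := hle.1
        have hle2 : b' ≤ b := hle.2
        simp only [Finset.coe_filter, Set.mem_ofPred_eq, YoungDiagram.mem_cells] at hx ⊢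
        have h3 : a' < d b' := lt_of_le_of_lt hle1 (lt_of_lt_of_le hx.2 (hd hle2))
        exact ⟨YoungDiagram.mem_iff_lt_colLen.2 (lt_of_lt_of_le h3 (hl b')), h3⟩ }
  refine ⟨μ, fun j => ?_⟩
  have hm : ∀ i, i < μ.colLen j ↔ i < d j := by
    intro i
    rw [← YoungDiagram.mem_iff_lt_colLen, ← YoungDiagram.mem_cells]
    simp only [μ, Finset.mem_filter, YoungDiagram.mem_cells, YoungDiagram.mem_iff_lt_colLen]
    have := hl j
    omega
  have h1 := hm (d j)
  have h2 := hm (μ.colLen j)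
  omega

/-- For a fixed partition λ, the set of partitions μ such that λ/μ is a
vertical strip, ordered by containment, is order-isomorphic to the product of chains
`∏_{i ≥ 1} {0, 1, …, m_i(λ)}` with the componentwise order.  Here `m_i(λ)`, the number of
parts of λ equal to i, is the multiplicity of i in the list of row lengths, and the index
`i : ℕ` of the product corresponds to the part size `i + 1`. -/
theorem vstrip_poset_iso_product_of_chains (lam : YoungDiagram) :
    Nonempty ({μ : YoungDiagram // lam.IsVStrip μ} ≃o
      ((i : ℕ) → Fin (Multiset.count (i + 1) (lam.rowLens : Multiset ℕ) + 1))) := by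
  let F : {μ : YoungDiagram // lam.IsVStrip μ} →
      ((i : ℕ) → Fin (Multiset.count (i + 1) (lam.rowLens : Multiset ℕ) + 1)) :=
    fun μ i => ⟨μ.1.colLen i - lam.colLen (i + 1), by
      have := (vs_iff lam μ.1).1 μ.2 i
      rw [vs_count]
      omega⟩
  have hF : ∀ a b, F a ≤ F b ↔ a ≤ b := by
    intro a b
    rw [← Subtype.coe_le_coe, vs_le_iff, Pi.le_def]
    refine forall_congr' fun i => ?_
    have h1 := (vs_iff lam a.1).1 a.2 i
    have h2 := (vs_iff lam b.1).1 b.2 i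
    simp only [F, Fin.mk_le_mk]
    omega
  have hs : Function.Surjective F := by
    intro f
    have hf : ∀ j, (f j : ℕ) ≤ lam.colLen j - lam.colLen (j + 1) := by
      intro j
      rw [← vs_count]
      exact Nat.lt_succ_iff.1 (f j).2
    have hc : ∀ j, lam.colLen (j + 1) ≤ lam.colLen j := fun j =>
      lam.colLen_anti _ _ (Nat.le_succ j)
    obtain ⟨μ, hμ⟩ := vs_exists lam (fun j => lam.colLen (j + 1) + f j)
      (antitone_nat_of_succ_le fun j => by
        have := hf (j + 1); have := hc (j + 1); omega)
      (fun j => by have := hf j; have := hc j; omega)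
    refine ⟨⟨μ, (vs_iff lam μ).2 fun j => ?_⟩, ?_⟩
    · have := hf j; have := hc j; have := hμ j; omega
    · funext j
      apply Fin.ext
      have := hμ j
      simp only [F]
      omega
  exact ⟨RelIso.ofSurjective (OrderEmbedding.ofMapLEIff F hF) hs⟩
end

section
/- Let N ≥ 1 and let ↓ denote the ℚ-linear map from ℚ[t_1,…,t_N] to ℚ[a_1,…,a_N] sending each monomial ∏_i t_i^{d_i} to ∏_i (a_i)_{d_i}, where (x)_d = x(x−1)⋯(x−d+1) is the falling factorial. Then for every polynomial p ∈ ℚ[t_1,…,t_N] and every partition μ, μ! times the coefficient of the monomial t^μ = ∏_i t_i^{m_i(μ)} in the formal power series p·exp(t_1 + t_2 + t_3 + ⋯) ∈ ℚ[[t_1, t_2, …]] equals (↓p)(m_1(μ), …, m_N(μ)), where μ! = ∏_i m_i(μ)!. -/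
/-- The multiplicity function of a partition (encoded as a Young diagram), as a monomial
exponent: the variable of index `i` (representing `t_{i+1}`) gets exponent `m_{i+1}(μ)`,
the number of parts of μ equal to `i+1`. -/
noncomputable def YoungDiagram.partMonomial (μ : YoungDiagram) : ℕ →₀ ℕ :=
  Finsupp.comapDomain Nat.succ (Multiset.toFinsupp (μ.rowLens : Multiset ℕ))
    (Nat.succ_injective.injOn)

/-- `μ! = ∏_i m_i(μ)!`, in terms of the multiplicity function. -/
noncomputable def partFactorial (d : ℕ →₀ ℕ) : ℚ :=
  ∏ i ∈ d.support, (Nat.factorial (d i) : ℚ)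

/-- The formal power series `exp(t_1 + t_2 + t_3 + ⋯)`: the coefficient of the monomial
with exponents e is `∏_i 1/(e_i)!`. -/
noncomputable def expTzero : MvPowerSeries ℕ ℚ :=
  fun e => ∏ i ∈ e.support, (1 / (Nat.factorial (e i) : ℚ))

/-- The umbral substitution `↓` sending `∏ tᵢ^{dᵢ}` to `∏ (aᵢ)_{dᵢ}`, with `(x)_d` the
falling factorial, extended ℚ-linearly; the target variable `aᵢ` is identified with the
source variable `tᵢ`. -/
noncomputable def downPoly {N : ℕ} (p : MvPolynomial (Fin N) ℚ) : MvPolynomial (Fin N) ℚ :=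
  ∑ d ∈ p.support, MvPolynomial.C (MvPolynomial.coeff d p) *
    ∏ i : Fin N, Polynomial.aeval (MvPolynomial.X i) (descPochhammer ℚ (d i))

lemma umbral_key {N : ℕ} (d : Fin N →₀ ℕ) (m : ℕ →₀ ℕ) :
    partFactorial m * (if d.mapDomain Fin.val ≤ m then
      MvPowerSeries.coeff (m - d.mapDomain Fin.val) expTzero else 0) =
    ∏ i : Fin N, ((m i.val).descFactorial (d i) : ℚ) := by
  set D : ℕ →₀ ℕ := d.mapDomain Fin.val with hD
  have hDi : ∀ i : Fin N, D i.val = d i := fun i =>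
    Finsupp.mapDomain_apply Fin.val_injective d i
  have hDo : ∀ i : ℕ, N ≤ i → D i = 0 := by
    intro i hi
    apply Finsupp.mapDomain_notin_range
    rintro ⟨j, rfl⟩
    exact absurd j.isLt (by omega)
  have hR : ∏ i : Fin N, ((m i.val).descFactorial (d i) : ℚ)
      = ∏ i ∈ Finset.range N, ((m i).descFactorial (D i) : ℚ) := by
    rw [Finset.prod_range]
    exact Finset.prod_congr rfl fun i _ => by rw [hDi]
  rw [hR]
  split_ifs with h
  · have hR2 : ∏ i ∈ Finset.range N, ((m i).descFactorial (D i) : ℚ) =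
        ∏ i ∈ Finset.range N ∪ m.support, ((m i).descFactorial (D i) : ℚ) := by
      apply Finset.prod_subset Finset.subset_union_left
      intro i _ hi
      rw [hDo i (by simpa using hi)]
      simp
    have h1 : partFactorial m =
        ∏ i ∈ Finset.range N ∪ m.support, ((m i).factorial : ℚ) := by
      apply Finset.prod_subset Finset.subset_union_right
      intro i _ hi
      rw [Finsupp.notMem_support_iff.mp hi]
      simp
    have h2 : MvPowerSeries.coeff (m - D) expTzero =
        ∏ i ∈ Finset.range N ∪ m.support, (1 / (((m - D) i).factorial : ℚ)) := by
      change ∏ i ∈ (m - D).support, (1 / (((m - D) i).factorial : ℚ)) = _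
      apply Finset.prod_subset
      · intro i hi
        apply Finset.mem_union_right
        rw [Finsupp.mem_support_iff] at hi ⊢
        rw [Finsupp.tsub_apply] at hi
        omega
      · intro i _ hi
        rw [Finsupp.notMem_support_iff.mp hi]
        simp
    rw [hR2, h1, h2, ← Finset.prod_mul_distrib]
    refine Finset.prod_congr rfl fun i _ => ?_
    rw [Finsupp.tsub_apply, ← Nat.factorial_mul_descFactorial (h i)]
    have := Nat.cast_ne_zero (R := ℚ).mpr (Nat.factorial_ne_zero (m i - D i))
    push_cast
    field_simp
  · rw [mul_zero]
    have : ∃ i, m i < D i := by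
      by_contra hc
      push Not at hc
      exact h hc
    obtain ⟨i, hi⟩ := this
    symm
    apply Finset.prod_eq_zero (i := i)
    · rw [Finset.mem_range]
      by_contra hc
      rw [hDo i (by omega)] at hi
      omega
    · rw [Nat.descFactorial_of_lt hi]
      simp

/-- For every polynomial p in the variables `t_1, …, t_N` and every
partition μ, μ! times the coefficient of `t^μ` in `p · exp(t_1 + t_2 + ⋯)` equals the
umbral substitution ↓p evaluated at `(m_1(μ), …, m_N(μ))`.  Variable `i : Fin N`
represents `t_{i+1}` (resp. `a_{i+1}`), and is identified with index `i : ℕ` of the power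
series ring in countably many variables. -/
theorem umbral_substitution_coefficient (N : ℕ) (hN : 1 ≤ N)
    (p : MvPolynomial (Fin N) ℚ) (μ : YoungDiagram) :
    partFactorial μ.partMonomial *
        MvPowerSeries.coeff μ.partMonomial
          ((MvPolynomial.rename (Fin.val) p : MvPowerSeries ℕ ℚ) * expTzero) =
      MvPolynomial.eval (fun i : Fin N => (μ.partMonomial i.val : ℚ)) (downPoly p) := by
  generalize μ.partMonomial = m
  have hp : ((MvPolynomial.rename (Fin.val) p : MvPolynomial ℕ ℚ) : MvPowerSeries ℕ ℚ) =
      ∑ d ∈ p.support, MvPowerSeries.monomial (d.mapDomain Fin.val) (MvPolynomial.coeff d p) := by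
    conv_lhs => rw [p.as_sum]
    rw [map_sum, ← MvPolynomial.coeToMvPowerSeries.ringHom_apply, map_sum]
    refine Finset.sum_congr rfl fun d _ => ?_
    rw [MvPolynomial.rename_monomial, MvPolynomial.coeToMvPowerSeries.ringHom_apply,
      MvPolynomial.coe_monomial]
  rw [hp, downPoly, Finset.sum_mul, map_sum, map_sum, Finset.mul_sum]
  refine Finset.sum_congr rfl fun d _ => ?_
  rw [MvPowerSeries.coeff_monomial_mul, map_mul, MvPolynomial.eval_C, map_prod]
  have hk := umbral_key d m
  have : ∏ i : Fin N, MvPolynomial.eval (fun i : Fin N => (m i.val : ℚ))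
      (Polynomial.aeval (MvPolynomial.X i : MvPolynomial (Fin N) ℚ) (descPochhammer ℚ (d i)))
      = ∏ i : Fin N, ((m i.val).descFactorial (d i) : ℚ) := by
    refine Finset.prod_congr rfl fun i _ => ?_
    rw [← descPochhammer_eval_eq_descFactorial, ← MvPolynomial.coe_aeval_eq_eval,
      RingHom.coe_coe, ← Polynomial.aeval_algHom_apply, MvPolynomial.aeval_X,
      Polynomial.coe_aeval_eq_eval]
  rw [this, ← hk]
  split_ifs
  · ring
  · simp
end

section
/- Let P_• be a bounded complex of FI-modules over ℂ in which every term is a finitely generated projective object of the category of FI-modules. Suppose that all homology of P_• is torsion, i.e. for every i there is an integer N_i such that H_i(P_•)(S) = 0 for every finite set S with |S| ≥ N_i. Then P_• is exact. -/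
open CategoryTheory

structure FIObj where
  α : Type
  fin : Fintype α

instance (S : FIObj) : Fintype S.α := S.fin

def FIObj.of (α : Type) [Fintype α] : FIObj := ⟨α, inferInstance⟩

instance : Category FIObj where
  Hom S T := {f : S.α → T.α // Function.Injective f}
  id S := ⟨id, Function.injective_id⟩
  comp f g := ⟨g.1 ∘ f.1, g.2.comp f.2⟩

/-- FI-modules over ℂ: functors from FI to ℂ-vector spaces. -/
abbrev FIMod := FIObj ⥤ ModuleCat.{0} ℂ

/-- A sub-FI-module. -/
structure FISub (M : FIMod) where
  carrier : ∀ S : FIObj, Submodule ℂ (M.obj S)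
  map_mem : ∀ {S T : FIObj} (f : S ⟶ T) (x : M.obj S), x ∈ carrier S → M.map f x ∈ carrier T

/-- A finitely generated FI-module. -/
def FIMod.FG (M : FIMod) : Prop :=
  ∃ (k : ℕ) (S : Fin k → FIObj) (m : ∀ i, M.obj (S i)),
    ∀ N : FISub M, (∀ i, m i ∈ N.carrier (S i)) → ∀ T, N.carrier T = ⊤

namespace FIAux

def opt (S : FIObj) : FIObj := FIObj.of (Option S.α)

def omap {S T : FIObj} (f : S ⟶ T) : opt S ⟶ opt T := ⟨Option.map f.1, Option.map_injective f.2⟩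

def io (S : FIObj) : S ⟶ opt S := ⟨some, Option.some_injective _⟩

lemma io_nat {S T : FIObj} (f : S ⟶ T) : io S ≫ omap f = f ≫ io T := rfl

lemma omap_id (S : FIObj) : omap (𝟙 S) = 𝟙 (opt S) := Subtype.ext Option.map_id

lemma omap_comp {S T U : FIObj} (f : S ⟶ T) (g : T ⟶ U) : omap (f ≫ g) = omap f ≫ omap g :=
  Subtype.ext (Option.map_comp_map f.1 g.1).symm

lemma card_opt (S : FIObj) : Fintype.card (opt S).α = Fintype.card S.α + 1 := by
  exact Fintype.card_option (α := S.α)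

lemma io_app (M : FIMod) {S T : FIObj} (f : S ⟶ T) (x : M.obj S) :
    (M.map (omap f)).hom ((M.map (io S)).hom x) = (M.map (io T)).hom ((M.map f).hom x) := by
  have := congrArg (fun g => (M.map g).hom x) (io_nat f)
  simpa using this

lemma nat_app {M N : FIMod} (φ : M ⟶ N) {S T : FIObj} (f : S ⟶ T) (x : M.obj S) :
    (φ.app T).hom ((M.map f).hom x) = (N.map f).hom ((φ.app S).hom x) := by
  have := congrArg (fun g => g.hom x) (φ.naturality f)
  exact this

abbrev R (M : FIMod) (S : FIObj) : Submodule ℂ (M.obj (opt S)) := LinearMap.range (M.map (io S)).hom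

lemma Rmap (M : FIMod) {S T : FIObj} (f : S ⟶ T) :
    R M S ≤ (R M T).comap (M.map (omap f)).hom := by
  rintro _ ⟨x, rfl⟩
  exact ⟨(M.map f).hom x, (io_app M f x).symm⟩

noncomputable def D (M : FIMod) : FIMod where
  obj S := ModuleCat.of ℂ (M.obj (opt S) ⧸ R M S)
  map {S T} f := ModuleCat.ofHom (Submodule.mapQ (R M S) (R M T) (M.map (omap f)).hom (Rmap M f))
  map_id S := by
    ext x
    simp [omap_id]
  map_comp f g := by
    ext x
    simp [omap_comp]

def mk (M : FIMod) (S : FIObj) (x : M.obj (opt S)) : (D M).obj S := (R M S).mkQ x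

lemma mk_surj (M : FIMod) (S : FIObj) (y : (D M).obj S) : ∃ x, mk M S x = y :=
  Submodule.mkQ_surjective (R M S) y

lemma mk_sub (M : FIMod) (S : FIObj) (x y) : mk M S (x - y) = mk M S x - mk M S y :=
  map_sub (R M S).mkQ x y

lemma mk_eq_zero (M : FIMod) (S : FIObj) (x) :
    mk M S x = 0 ↔ ∃ y, (M.map (io S)).hom y = x :=
  Submodule.Quotient.mk_eq_zero (R M S)

lemma Dmap_mk (M : FIMod) {S T : FIObj} (f : S ⟶ T) (x) :
    ((D M).map f).hom (mk M S x) = mk M T ((M.map (omap f)).hom x) := rfl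

lemma Rapp {M N : FIMod} (φ : M ⟶ N) (S : FIObj) :
    R M S ≤ (R N S).comap (φ.app (opt S)).hom := by
  rintro _ ⟨x, rfl⟩
  exact ⟨(φ.app S).hom x, (nat_app φ _ x).symm⟩

noncomputable def Dφ {M N : FIMod} (φ : M ⟶ N) : D M ⟶ D N where
  app S := ModuleCat.ofHom (Submodule.mapQ (R M S) (R N S) (φ.app (opt S)).hom (Rapp φ S))
  naturality S T f := by
    ext x
    obtain ⟨x, rfl⟩ := mk_surj M S x
    exact congrArg (mk N T) (nat_app φ (omap f) x)

lemma Dφ_mk {M N : FIMod} (φ : M ⟶ N) (S : FIObj) (x) :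
    ((Dφ φ).app S).hom (mk M S x) = mk N S ((φ.app (opt S)).hom x) := rfl

def Kn : ℕ → FIMod → Prop
  | 0, M => ∀ S (x : M.obj S), x = 0
  | n + 1, M => (∀ S (x : M.obj S), (M.map (io S)).hom x = 0 → x = 0) ∧ Kn n (D M)

lemma D_zero {M : FIMod} (h : ∀ S (x : M.obj S), x = 0) : ∀ S (x : (D M).obj S), x = 0 := by
  intro S x
  obtain ⟨x, rfl⟩ := mk_surj M S x
  rw [h _ x]; exact map_zero (R M S).mkQ

lemma Kn_zero (n : ℕ) : ∀ {M : FIMod}, (∀ S (x : M.obj S), x = 0) → Kn n M := by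
  induction n with
  | zero => exact fun h => h
  | succ n ih => exact fun h => ⟨fun S x _ => h S x, ih (D_zero h)⟩

lemma Kn_succ (n : ℕ) : ∀ {M : FIMod}, Kn n M → Kn (n + 1) M := by
  induction n with
  | zero => exact fun h => Kn_zero 1 h
  | succ n ih => exact fun h => ⟨h.1, ih h.2⟩

lemma Kn_mono {n m : ℕ} (h : n ≤ m) {M : FIMod} (hM : Kn n M) : Kn m M := by
  induction h with
  | refl => exact hM
  | step _ ih => exact Kn_succ _ ih

lemma Kn_retract (n : ℕ) : ∀ {M N : FIMod} (i : M ⟶ N) (r : N ⟶ M)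
    (_ : ∀ S x, (r.app S).hom ((i.app S).hom x) = x), Kn n N → Kn n M := by
  induction n with
  | zero =>
    intro M N i r h hN S x
    rw [← h S x, hN S ((i.app S).hom x), map_zero]
  | succ n ih =>
    intro M N i r h hN
    refine ⟨fun S x hx => ?_, ih (Dφ i) (Dφ r) ?_ hN.2⟩
    · rw [← h S x, hN.1 S ((i.app S).hom x) (by rw [← nat_app, hx, map_zero]), map_zero]
    · intro S x
      obtain ⟨x, rfl⟩ := mk_surj M S x
      rw [Dφ_mk, Dφ_mk, h]

theorem main (n : ℕ) : ∀ (C : ℕ → FIMod) (d : ∀ i, C (i + 1) ⟶ C i)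
    (_ : ∀ i S x, ((d i).app S).hom (((d (i+1)).app S).hom x) = 0)
    (_ : ∀ S (x : (C 0).obj S), x = 0)
    (_ : ∀ i, Kn n (C i))
    (_ : ∀ k : ℕ, ∃ N : ℕ, ∀ S : FIObj, N ≤ Fintype.card S.α →
      ∀ x, ((d k).app S).hom x = 0 → ∃ y, ((d (k+1)).app S).hom y = x),
    ∀ k S x, ((d k).app S).hom x = 0 → ∃ y, ((d (k+1)).app S).hom y = x := by
  induction n with
  | zero =>
    intro C d hdd h0 hK ht k S x hx
    exact ⟨0, by rw [map_zero]; exact (hK _ S x).symm⟩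
  | succ n ih =>
    intro C d hdd h0 hK ht
    have hD := ih (fun i => D (C i)) (fun i => Dφ (d i)) (by
        intro i S x
        obtain ⟨x, rfl⟩ := mk_surj _ S x
        rw [Dφ_mk, Dφ_mk, hdd]; exact map_zero (R _ S).mkQ) (D_zero h0) (fun i => (hK i).2) (by
        intro k
        have hz : ∃ N : ℕ, ∀ S : FIObj, N ≤ Fintype.card S.α →
            ∀ z : (C k).obj S, (∀ u, ((d k).app (opt S)).hom u = ((C k).map (io S)).hom z →
              ∃ w, ((d k).app S).hom w = z) := by
          cases k with
          | zero => exact ⟨0, fun S _ z u _ => ⟨0, by rw [map_zero]; exact (h0 S z).symm⟩⟩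
          | succ k =>
            obtain ⟨N, hN⟩ := ht k
            refine ⟨N, fun S hS z u hu => hN S hS z ?_⟩
            apply (hK k).1
            rw [← nat_app, ← hu, hdd]
        obtain ⟨N1, h1⟩ := hz
        obtain ⟨N2, h2⟩ := ht k
        refine ⟨max N1 N2, fun S hS x hx => ?_⟩
        obtain ⟨y, rfl⟩ := mk_surj _ S x
        rw [Dφ_mk, mk_eq_zero] at hx
        obtain ⟨z, hz⟩ := hx
        obtain ⟨w, hw⟩ := h1 S (by omega) z y hz.symm
        obtain ⟨u, hu⟩ := h2 (opt S) (by rw [card_opt]; omega)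
          (y - ((C (k+1)).map (io S)).hom w) (by rw [map_sub, nat_app, hw, hz, sub_self])
        refine ⟨mk _ S u, ?_⟩
        rw [Dφ_mk, hu, mk_sub, (mk_eq_zero _ S (((C (k+1)).map (io S)).hom w)).2 ⟨w, rfl⟩, sub_zero])
    intro k
    obtain ⟨N, hN⟩ := ht k
    have key : ∀ m, ∀ S : FIObj, N ≤ Fintype.card S.α + m → 
      ∀ x, ((d k).app S).hom x = 0 → ∃ y, ((d (k+1)).app S).hom y = x := by
      intro m
      induction m with
      | zero => exact fun S hS => hN S hS
      | succ m ihm =>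
        intro S hS x hx
        obtain ⟨u, hu⟩ := ihm (opt S) (by rw [card_opt]; omega)
          (((C (k+1)).map (io S)).hom x) (by rw [nat_app, hx, map_zero])
        obtain ⟨v, hv⟩ := hD (k+1) S (mk _ S u) (by
          rw [Dφ_mk, mk_eq_zero]; exact ⟨x, hu.symm⟩)
        obtain ⟨v, rfl⟩ := mk_surj _ S v
        rw [Dφ_mk, ← sub_eq_zero, ← mk_sub, mk_eq_zero] at hv
        obtain ⟨w, hw⟩ := hv
        refine ⟨-w, ?_⟩
        rw [← sub_eq_zero]
        apply (hK (k+1)).1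
        rw [map_sub, ← nat_app, map_neg, hw, map_neg, map_sub, hdd, hu]
        simp
    exact fun S => key N S (by omega)

/-! free modules -/

def X {k : ℕ} (A : Fin k → FIObj) (B : Type) (S : FIObj) : Type :=
  {x : Σ i, (A i).α → S.α ⊕ B // Function.Injective x.2 ∧ ∀ b, ∃ a, x.2 a = Sum.inr b}

def Xmap {k : ℕ} (A : Fin k → FIObj) (B : Type) {S T : FIObj} (f : S ⟶ T) (x : X A B S) : X A B T :=
  ⟨⟨x.1.1, Sum.map f.1 id ∘ x.1.2⟩, (Function.Injective.sumMap f.2 Function.injective_id).comp x.2.1,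
    fun b => by obtain ⟨a, ha⟩ := x.2.2 b; exact ⟨a, by simp [ha]⟩⟩

noncomputable def F {k : ℕ} (A : Fin k → FIObj) (B : Type) : FIMod where
  obj S := ModuleCat.of ℂ (X A B S →₀ ℂ)
  map f := ModuleCat.ofHom (Finsupp.lmapDomain ℂ ℂ (Xmap A B f))
  map_id S := by
    have : Xmap A B (𝟙 S) = id := by
      funext x
      apply Subtype.ext
      exact Sigma.ext rfl (heq_of_eq (by
        change Sum.map id id ∘ x.1.2 = x.1.2
        simp))
    ext x : 2
    simp [this]
  map_comp {S T U} f g := by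
    have : Xmap A B (f ≫ g) = Xmap A B g ∘ Xmap A B f := by
      funext x
      apply Subtype.ext
      exact Sigma.ext rfl (heq_of_eq (by
        change Sum.map (g.1 ∘ f.1) id ∘ x.1.2 = Sum.map g.1 id ∘ Sum.map f.1 id ∘ x.1.2
        rw [← Function.comp_assoc, Sum.map_comp_map]; rfl))
    ext x : 2
    simp [this, Finsupp.lmapDomain_comp]

lemma Xmap_inj {k : ℕ} (A : Fin k → FIObj) (B : Type) {S T : FIObj} (f : S ⟶ T) :
    Function.Injective (Xmap A B f) := by
  rintro ⟨⟨i, x⟩, hx⟩ ⟨⟨j, y⟩, hy⟩ h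
  have h := congrArg Subtype.val h
  simp only [Xmap] at h
  obtain ⟨rfl, h⟩ := Sigma.mk.inj_iff.1 h
  have := (Function.Injective.sumMap f.2 Function.injective_id).comp_left (eq_of_heq h)
  subst this
  rfl

def e (S B : Type) : Option S ⊕ B ≃ S ⊕ Option B where
  toFun
    | .inl none => .inr none
    | .inl (some s) => .inl s
    | .inr b => .inr (some b)
  invFun
    | .inr none => .inl none
    | .inl s => .inl (some s)
    | .inr (some b) => .inr b
  left_inv := by rintro ((_ | _) | _) <;> rfl
  right_inv := by rintro (_ | (_ | _)) <;> rfl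

lemma e_nat {S T : Type} (B : Type) (f : S → T) (x) :
    e T B (Sum.map (Option.map f) id x) = Sum.map f id (e S B x) := by
  rcases x with ((_ | _) | _) <;> rfl

lemma e_symm_nat {S T : Type} (B : Type) (f : S → T) (x) :
    (e T B).symm (Sum.map f id x) = Sum.map (Option.map f) id ((e S B).symm x) := by
  rcases x with (_ | (_ | _)) <;> rfl

section
variable {k : ℕ} (A : Fin k → FIObj) (B : Type)

def hit {S : FIObj} (x : X A B (opt S)) : Prop :=
  ∃ a, x.1.2 a = Sum.inl (none : Option S.α)

def up {S : FIObj} (x : X A B (opt S)) (h : hit A B x) : X A (Option B) S :=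
  ⟨⟨x.1.1, fun a => e S.α B (x.1.2 a)⟩, (e S.α B).injective.comp x.2.1, by
    rintro (_ | b)
    · obtain ⟨a, ha⟩ := h
      exact ⟨a, by dsimp only; rw [ha]; rfl⟩
    · obtain ⟨a, ha⟩ := x.2.2 b
      exact ⟨a, by dsimp only; rw [ha]; rfl⟩⟩

def down {S : FIObj} (x : X A (Option B) S) : X A B (opt S) :=
  ⟨⟨x.1.1, fun a => (e S.α B).symm (x.1.2 a)⟩, (e S.α B).symm.injective.comp x.2.1, by
    intro b
    obtain ⟨a, ha⟩ := x.2.2 (some b)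
    exact ⟨a, by dsimp only; rw [ha]; rfl⟩⟩

lemma X_ext {S : FIObj} {x y : X A B S} (i) (u v) (hx : x.1 = ⟨i, u⟩) (hy : y.1 = ⟨i, v⟩)
    (h : ∀ a, u a = v a) : x = y := by
  apply Subtype.ext
  rw [hx, hy, funext h]

lemma down_up {S : FIObj} (x : X A B (opt S)) (h : hit A B x) : down A B (up A B x h) = x :=
  X_ext A B _ _ _ rfl rfl fun _ => (e S.α B).symm_apply_apply _

lemma down_nat {S T : FIObj} (f : S ⟶ T) (x : X A (Option B) S) :
    down A B (Xmap A (Option B) f x) = Xmap A B (omap f) (down A B x) :=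
  X_ext A B _ _ _ rfl rfl fun _ => e_symm_nat B f.1 _

lemma up_nat {S T : FIObj} (f : S ⟶ T) (x : X A B (opt S)) (h : hit A B x) (h') :
    up A B (Xmap A B (omap f) x) h' = Xmap A (Option B) f (up A B x h) :=
  X_ext A (Option B) _ _ _ rfl rfl fun _ => e_nat B f.1 _

lemma hit_nat {S T : FIObj} (f : S ⟶ T) (x : X A B (opt S)) :
    hit A B (Xmap A B (omap f) x) ↔ hit A B x := by
  refine exists_congr fun a => ?_
  have aux : ∀ y : Option S.α ⊕ B, Sum.map (Option.map f.1) id y = Sum.inl none ↔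
      y = Sum.inl none := by
    rintro ((_ | _) | _) <;> simp
  exact aux (x.1.2 a)

lemma not_hit {S : FIObj} (x : X A B S) : ¬ hit A B (Xmap A B (io S) x) := by
  rintro ⟨a, ha⟩
  change Sum.map some id (x.1.2 a) = _ at ha
  rcases h : x.1.2 a with (_ | _) <;> simp [h] at ha

lemma of_not_hit {S : FIObj} (x : X A B (opt S)) (h : ¬ hit A B x) :
    ∃ y, Xmap A B (io S) y = x := by
  have h1 : ∀ a, ∃ y : S.α ⊕ B, Sum.map some id y = x.1.2 a := by
    intro a
    rcases h2 : x.1.2 a with ((_ | s) | b)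
    · exact (h ⟨a, h2⟩).elim
    · exact ⟨.inl s, rfl⟩
    · exact ⟨.inr b, rfl⟩
  choose y hy using h1
  refine ⟨⟨⟨x.1.1, y⟩, ?_, ?_⟩, ?_⟩
  · intro a b hab
    apply x.2.1
    rw [← hy a, ← hy b]
    exact congrArg _ hab
  · intro b
    obtain ⟨a, ha⟩ := x.2.2 b
    refine ⟨a, ?_⟩
    rw [← hy a] at ha
    dsimp only
    rcases h3 : y a with (_ | _) <;> simp [h3] at ha
    exact congrArg Sum.inr (Sum.inr_injective ha)
  · exact X_ext A B _ _ _ rfl rfl hy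

open Classical in
noncomputable def p (S : FIObj) : (X A B (opt S) →₀ ℂ) →ₗ[ℂ] (X A (Option B) S →₀ ℂ) :=
  Finsupp.linearCombination ℂ
    (fun x => if h : hit A B x then Finsupp.single (up A B x h) 1 else 0)

noncomputable def q (S : FIObj) : (X A (Option B) S →₀ ℂ) →ₗ[ℂ] (X A B (opt S) →₀ ℂ) :=
  Finsupp.lmapDomain ℂ ℂ (down A B)

lemma p_hit {S : FIObj} (x : X A B (opt S)) (h : hit A B x) (c : ℂ) :
    p A B S (Finsupp.single x c) = Finsupp.single (up A B x h) c := by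
  simp [p, h]

lemma p_not {S : FIObj} (x : X A B (opt S)) (h : ¬ hit A B x) (c : ℂ) :
    p A B S (Finsupp.single x c) = 0 := by
  simp [p, h]

lemma F_map_single {S T : FIObj} (f : S ⟶ T) (x : X A B S) (c : ℂ) :
    ((F A B).map f).hom (Finsupp.single x c : X A B S →₀ ℂ)
      = (Finsupp.single (Xmap A B f x) c : X A B T →₀ ℂ) :=
  Finsupp.mapDomain_single

lemma p_range (S : FIObj) : R (F A B) S ≤ LinearMap.ker (p A B S) := by
  refine LinearMap.range_le_ker_iff.2 ?_
  apply Finsupp.lhom_ext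
  intro x c
  change p A B S (((F A B).map (io S)).hom (Finsupp.single x c : X A B S →₀ ℂ)) = 0
  rw [F_map_single]
  exact p_not A B _ (not_hit A B x) c

lemma p_nat {S T : FIObj} (f : S ⟶ T) (x : X A B (opt S) →₀ ℂ) :
    p A B T (((F A B).map (omap f)).hom x) = ((F A (Option B)).map f).hom (p A B S x) := by
  have : (p A B T) ∘ₗ (Finsupp.lmapDomain ℂ ℂ (Xmap A B (omap f)))
      = (Finsupp.lmapDomain ℂ ℂ (Xmap A (Option B) f)) ∘ₗ (p A B S) := by
    apply Finsupp.lhom_ext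
    intro x c
    simp only [LinearMap.comp_apply, Finsupp.lmapDomain_apply, Finsupp.mapDomain_single]
    by_cases h : hit A B x
    · rw [p_hit A B x h, p_hit A B _ ((hit_nat A B f x).2 h), up_nat A B f x h,
        Finsupp.mapDomain_single]
    · rw [p_not A B x h, p_not A B _ (fun h' => h ((hit_nat A B f x).1 h')),
        Finsupp.mapDomain_zero]
  exact LinearMap.congr_fun this x

lemma q_nat {S T : FIObj} (f : S ⟶ T) (x : X A (Option B) S →₀ ℂ) :
    q A B T (((F A (Option B)).map f).hom x) = ((F A B).map (omap f)).hom (q A B S x) := by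
  have : (q A B T) ∘ₗ (Finsupp.lmapDomain ℂ ℂ (Xmap A (Option B) f))
      = (Finsupp.lmapDomain ℂ ℂ (Xmap A B (omap f))) ∘ₗ (q A B S) := by
    apply Finsupp.lhom_ext
    intro x c
    simp only [LinearMap.comp_apply, q, Finsupp.lmapDomain_apply, Finsupp.mapDomain_single,
      down_nat]
  exact LinearMap.congr_fun this x

noncomputable def pp : D (F A B) ⟶ F A (Option B) where
  app S := ModuleCat.ofHom ((R (F A B) S).liftQ (p A B S) (p_range A B S))
  naturality S T f := by
    ext x
    obtain ⟨x, rfl⟩ := mk_surj _ S x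
    exact p_nat A B f x

noncomputable def qq : F A (Option B) ⟶ D (F A B) where
  app S := ModuleCat.ofHom ((R (F A B) S).mkQ ∘ₗ q A B S)
  naturality S T f := by
    ext x : 2
    exact congrArg (mk (F A B) T) (q_nat A B f _)

lemma qq_pp (S : FIObj) (x : (D (F A B)).obj S) :
    ((qq A B).app S).hom (((pp A B).app S).hom x) = x := by
  obtain ⟨x, rfl⟩ := mk_surj _ S x
  let g : (X A B (opt S) →₀ ℂ) →ₗ[ℂ] (D (F A B)).obj S := (R (F A B) S).mkQ
  have : g ∘ₗ (q A B S ∘ₗ p A B S) = g := by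
    apply Finsupp.lhom_ext
    intro x c
    simp only [LinearMap.comp_apply]
    by_cases h : hit A B x
    · rw [p_hit A B x h, q, Finsupp.lmapDomain_apply, Finsupp.mapDomain_single, down_up]
    · rw [p_not A B x h, map_zero, map_zero]
      obtain ⟨y, rfl⟩ := of_not_hit A B x h
      exact ((mk_eq_zero _ S _).2 ⟨_, F_map_single A B (io S) y c⟩).symm
  exact LinearMap.congr_fun this x

end

lemma Kn_F {k : ℕ} (A : Fin k → FIObj) (n : ℕ) : ∀ (B : Type) [Fintype B],
    (∀ i, Fintype.card (A i).α < n + Fintype.card B) → Kn n (F A B) := by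
  induction n with
  | zero =>
    intro B _ h S x
    have : IsEmpty (X A B S) := ⟨fun x => by
      choose g hg using x.2.2
      have hi : Function.Injective g := fun a b hab => by
        have := (hg a).symm.trans ((congrArg x.1.2 hab).trans (hg b))
        exact Sum.inr_injective this
      have := Fintype.card_le_of_injective g hi
      have := h x.1.1
      omega⟩
    exact Subsingleton.elim (α := X A B S →₀ ℂ) x 0
  | succ n ih =>
    intro B _ h
    refine ⟨fun S x hx => ?_, ?_⟩
    · apply Finsupp.mapDomain_injective (M := ℂ) (Xmap_inj A B (io S))
      exact hx.trans (Finsupp.mapDomain_zero).symm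
    · refine Kn_retract n (pp A B) (qq A B) (qq_pp A B) (ih (Option B) fun i => ?_)
      have := h i
      rw [Fintype.card_option]
      omega

section
variable {k : ℕ} (A : Fin k → FIObj)

def toHom {S : FIObj} (x : X A Empty S) : A x.1.1 ⟶ S :=
  ⟨fun a => Sum.elim id Empty.elim (x.1.2 a), fun a b h => x.2.1 (by
    rcases h1 : x.1.2 a with (s | s)
    · rcases h2 : x.1.2 b with (t | t)
      · simpa [h1, h2] using h
      · exact t.elim
    · exact s.elim)⟩

lemma toHom_nat {S T : FIObj} (f : S ⟶ T) (x : X A Empty S) :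
    toHom A (Xmap A Empty f x) = toHom A x ≫ f := by
  apply Subtype.ext
  funext a
  change Sum.elim id Empty.elim (Sum.map f.1 id (x.1.2 a)) = f.1 (Sum.elim id Empty.elim (x.1.2 a))
  rcases x.1.2 a with (s | s)
  · rfl
  · exact s.elim

variable (M : FIMod) (m : ∀ i, M.obj (A i))

noncomputable def cov : F A Empty ⟶ M where
  app S := ModuleCat.ofHom
    (Finsupp.linearCombination ℂ (fun x : X A Empty S => (M.map (toHom A x)).hom (m x.1.1)))
  naturality S T f := by
    apply ModuleCat.hom_ext
    apply Finsupp.lhom_ext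
    intro x c
    change Finsupp.linearCombination ℂ (fun x : X A Empty T => (M.map (toHom A x)).hom (m x.1.1))
      (((F A Empty).map f).hom (Finsupp.single x c : X A Empty S →₀ ℂ)) = (M.map f).hom
      (Finsupp.linearCombination ℂ (fun x : X A Empty S => (M.map (toHom A x)).hom (m x.1.1))
        (Finsupp.single x c))
    rw [F_map_single, Finsupp.linearCombination_single, Finsupp.linearCombination_single,
      toHom_nat, map_smul]
    exact congrArg (fun g => c • g.hom (m x.1.1)) (M.map_comp (toHom A x) f)

lemma cov_mem (i : Fin k) : m i ∈ LinearMap.range ((cov A M m).app (A i)).hom := by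
  let x : X A Empty (A i) := ⟨⟨i, Sum.inl⟩, Sum.inl_injective, fun b => b.elim⟩
  refine ⟨(Finsupp.single x 1 : X A Empty (A i) →₀ ℂ), ?_⟩
  change Finsupp.linearCombination ℂ
    (fun x : X A Empty (A i) => (M.map (toHom A x)).hom (m x.1.1)) (Finsupp.single x 1) = _
  rw [Finsupp.linearCombination_single, one_smul]
  have : toHom A x = 𝟙 (A i) := rfl
  rw [this, M.map_id]
  rfl

end

lemma exists_Kn (M : FIMod) (hfg : M.FG) (hp : Projective M) : ∃ n, Kn n M := by
  obtain ⟨k, A, m, h⟩ := hfg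
  have hs := h ⟨fun S => LinearMap.range ((cov A M m).app S).hom, by
    rintro S T f _ ⟨x, rfl⟩
    exact ⟨_, nat_app (cov A M m) f x⟩⟩ (cov_mem A M m)
  have : ∀ S, Epi ((cov A M m).app S) := fun S =>
    (ModuleCat.epi_iff_surjective _).2 (LinearMap.range_eq_top.1 (hs S))
  have : Epi (cov A M m) := NatTrans.epi_of_epi_app _
  refine ⟨∑ i, Fintype.card (A i).α + 1, Kn_retract _ (Projective.factorThru (𝟙 M) (cov A M m))
    (cov A M m) ?_ (Kn_F A _ Empty fun i => ?_)⟩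
  · intro S x
    have := congrArg (fun g => (g.app S).hom x) (Projective.factorThru_comp (𝟙 M) (cov A M m))
    exact this
  · have := Finset.single_le_sum (f := fun i => Fintype.card (A i).α) (fun _ _ => Nat.zero_le _)
      (Finset.mem_univ i)
    simp only [Fintype.card_empty] 
    omega

def shC (C : ℕ → FIMod) : ℕ → FIMod
  | 0 => (Functor.const _).obj (ModuleCat.of ℂ PUnit)
  | k + 1 => C k

def shd (C : ℕ → FIMod) (d : ∀ i, C (i + 1) ⟶ C i) : ∀ i, shC C (i + 1) ⟶ shC C i
  | 0 => 0
  | k + 1 => d k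

end FIAux

/-- A bounded complex of finitely generated projective FI-modules whose
homology is torsion (vanishes on all sufficiently large finite sets) is exact.  The complex
is written `⋯ → C (i+1) --d i--> C i → ⋯ → C 1 --d 0--> C 0`, extended by zero to the right;
it is bounded above by `b`. -/
theorem bounded_projective_complex_torsion_homology_exact
    (C : ℕ → FIMod) (d : ∀ i, C (i + 1) ⟶ C i)
    (hdd : ∀ i, d (i + 1) ≫ d i = 0)
    (hbdd : ∃ b : ℕ, ∀ i, b < i → ∀ (S : FIObj) (x : (C i).obj S), x = 0)
    (hfg : ∀ i, FIMod.FG (C i)) (hproj : ∀ i, Projective (C i))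
    (htors : ∀ k : ℕ, ∃ N : ℕ, ∀ S : FIObj, N ≤ Fintype.card S.α →
      (∀ x ∈ LinearMap.ker ((d k).app S).hom, x ∈ LinearMap.range ((d (k + 1)).app S).hom))
    (htors0 : ∃ N : ℕ, ∀ S : FIObj, N ≤ Fintype.card S.α →
      Function.Surjective ((d 0).app S)) :
    (∀ (k : ℕ) (S : FIObj),
        LinearMap.ker ((d k).app S).hom = LinearMap.range ((d (k + 1)).app S).hom) ∧
      (∀ S : FIObj, Function.Surjective ((d 0).app S)) := by
  obtain ⟨b, hb⟩ := hbdd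
  have hn : ∃ n, ∀ i, FIAux.Kn n (C i) := by
    choose n hn using fun i => FIAux.exists_Kn (C i) (hfg i) (hproj i)
    refine ⟨∑ j ∈ Finset.range (b + 1), n j, fun i => ?_⟩
    by_cases hi : b < i
    · exact FIAux.Kn_zero _ (hb i hi)
    · exact FIAux.Kn_mono (Finset.single_le_sum (f := n) (fun _ _ => Nat.zero_le _)
        (Finset.mem_range.2 (by omega))) (hn i)
  obtain ⟨n, hn⟩ := hn
  have hd : ∀ i S x, ((d i).app S).hom (((d (i+1)).app S).hom x) = 0 := by
    intro i S x
    exact congrArg (fun g => (g.app S).hom x) (hdd i)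
  have h0 : ∀ S (x : (FIAux.shC C 0).obj S), x = 0 := fun S x =>
    Subsingleton.elim (α := PUnit) x 0
  have key := FIAux.main n (FIAux.shC C) (FIAux.shd C d)
    (by
      rintro (_ | i) S x
      · exact h0 S _
      · exact hd i S x)
    h0
    (by
      rintro (_ | i)
      · exact FIAux.Kn_zero _ h0
      · exact hn i)
    (by
      rintro (_ | i)
      · obtain ⟨N, hN⟩ := htors0
        exact ⟨N, fun S hS x _ => hN S hS x⟩
      · obtain ⟨N, hN⟩ := htors i
        exact ⟨N, fun S hS x hx => hN S hS x hx⟩)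
  refine ⟨fun k S => le_antisymm (fun x hx => key (k + 1) S x hx) ?_, fun S x => key 0 S x (h0 S _)⟩
  rintro _ ⟨x, rfl⟩
  exact hd k S x
end

section
/- Let M be a finitely generated FI-module over ℂ. Then each vector space M_n is finite-dimensional, and there exist polynomials p, q ∈ ℚ[t] such that the Hilbert series satisfies Σ_{n ≥ 0} dim(M_n)·t^n/n! = p(t)·e^t + q(t) as formal power series in t. -/
open CategoryTheory

def EPk : ℕ → (ℕ → ℚ) → Prop
  | 0, h => ∃ N, ∀ n ≥ N, h n = 0
  | k+1, h => EPk k (fun n => h (n+1) - h n)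

theorem EPk.congr {k : ℕ} : ∀ {h h' : ℕ → ℚ}, EPk k h → (∃ N, ∀ n ≥ N, h n = h' n) → EPk k h' := by
  induction k with
  | zero =>
    rintro h h' ⟨N, hN⟩ ⟨N', hN'⟩
    refine ⟨max N N', fun n hn => ?_⟩
    rw [← hN' n (by omega), hN n (by omega)]
  | succ k ih =>
    rintro h h' H ⟨N', hN'⟩
    refine ih (h := fun n => h (n+1) - h n) H ⟨N', fun n hn => ?_⟩
    simp only [hN' n hn, hN' (n+1) (by omega)]

theorem EPk.add {k : ℕ} : ∀ {h h' : ℕ → ℚ}, EPk k h → EPk k h' → EPk k (fun n => h n + h' n) := by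
  induction k with
  | zero =>
    rintro h h' ⟨N, hN⟩ ⟨N', hN'⟩
    refine ⟨max N N', fun n hn => ?_⟩
    simp [hN' n (by omega), hN n (by omega)]
  | succ k ih =>
    intro h h' H H'
    refine (ih (h := fun n => h (n+1) - h n) (h' := fun n => h' (n+1) - h' n) H H').congr ⟨0, fun n _ => ?_⟩
    ring

theorem EPk.succ {k : ℕ} : ∀ {h : ℕ → ℚ}, EPk k h → EPk (k+1) h := by
  induction k with
  | zero =>
    rintro h ⟨N, hN⟩
    refine ⟨N, fun n hn => ?_⟩
    simp [hN n hn, hN (n+1) (by omega)]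
  | succ k ih =>
    intro h H
    exact ih (h := fun n => h (n+1) - h n) H

theorem EPk.mono {k l : ℕ} (hkl : k ≤ l) {h : ℕ → ℚ} (H : EPk k h) : EPk l h := by
  induction hkl with
  | refl => exact H
  | step _ ih => exact ih.succ

theorem EPk.shift {k : ℕ} : ∀ {h : ℕ → ℚ}, EPk k h → EPk k (fun n => h (n-1)) := by
  induction k with
  | zero =>
    rintro h ⟨N, hN⟩
    exact ⟨N+1, fun n hn => hN _ (by omega)⟩
  | succ k ih =>
    intro h H
    refine (ih (h := fun n => h (n+1) - h n) H).congr ⟨1, fun n hn => ?_⟩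
    simp only
    rw [show n - 1 + 1 = n + 1 - 1 by omega]

theorem EPk.sum {k : ℕ} {h : ℕ → ℚ} (H : EPk k h) :
    EPk (k+1) (fun n => ∑ j ∈ Finset.range n, h j) := by
  refine EPk.congr (k := k) (h := h) H ⟨0, fun n _ => ?_⟩
  simp [Finset.sum_range_succ]

def EP (h : ℕ → ℚ) : Prop := ∃ k, EPk k h

theorem EP.congr {h h' : ℕ → ℚ} (H : EP h) (N : ℕ) (e : ∀ n ≥ N, h n = h' n) : EP h' := by
  obtain ⟨k, H⟩ := H
  exact ⟨k, H.congr ⟨N, e⟩⟩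

theorem EP.zero : EP (fun _ => 0) := ⟨0, 0, fun _ _ => rfl⟩

theorem EP.add {h h' : ℕ → ℚ} (H : EP h) (H' : EP h') : EP (fun n => h n + h' n) := by
  obtain ⟨k, H⟩ := H
  obtain ⟨l, H'⟩ := H'
  exact ⟨max k l, (H.mono (le_max_left _ _)).add (H'.mono (le_max_right _ _))⟩

theorem EP.shift {h : ℕ → ℚ} (H : EP h) (i : ℕ) : EP (fun n => h (n - i)) := by
  induction i with
  | zero => exact H
  | succ i ih =>
    obtain ⟨k, ih⟩ := ih
    refine ⟨k, ih.shift.congr ⟨0, fun n _ => ?_⟩⟩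
    congr 1
    omega

theorem EP.sum {h : ℕ → ℚ} (H : EP h) : EP (fun n => ∑ j ∈ Finset.range n, h j) := by
  obtain ⟨k, H⟩ := H
  exact ⟨k+1, H.sum⟩

theorem EP.finset_sum {ι : Type*} (s : Finset ι) (h : ι → ℕ → ℚ) (H : ∀ i ∈ s, EP (h i)) :
    EP (fun n => ∑ i ∈ s, h i n) := by
  classical
  induction s using Finset.induction_on with
  | empty => simpa using EP.zero
  | insert a s ha ih =>
    refine ((H a (by simp)).add (ih fun i hi => H i (by simp [hi]))).congr 0 fun n _ => ?_
    simp [Finset.sum_insert ha]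

theorem EPk.choose {k : ℕ} : ∀ {h : ℕ → ℚ}, EPk k h →
    ∃ (c : ℕ → ℚ) (N : ℕ), ∀ n ≥ N, h n = ∑ j ∈ Finset.range k, c j * (n.choose j : ℚ) := by
  induction k with
  | zero =>
    rintro h ⟨N, hN⟩
    exact ⟨0, N, fun n hn => by simp [hN n hn]⟩
  | succ k ih =>
    intro h H
    obtain ⟨c, N, hN⟩ := ih (h := fun n => h (n+1) - h n) H
    refine ⟨fun j => Nat.casesOn j (h N - ∑ j ∈ Finset.range k, c j * (N.choose (j+1) : ℚ)) c,
      N, fun n hn => ?_⟩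
    rw [Finset.sum_range_succ']
    simp only [Nat.choose_zero_right]
    induction n, hn using Nat.le_induction with
    | base => simp
    | succ n hn ih2 =>
      have := hN n hn
      rw [sub_eq_iff_eq_add] at this
      rw [this, ih2, ← add_assoc, ← Finset.sum_add_distrib]
      congr 1
      refine Finset.sum_congr rfl fun j _ => ?_
      rw [Nat.choose_succ_succ n j]
      push_cast
      ring

theorem EP.series {h : ℕ → ℚ} (H : EP h) : ∃ p q : Polynomial ℚ, ∀ n : ℕ,
      PowerSeries.coeff n
          ((p : PowerSeries ℚ) * PowerSeries.exp ℚ + (q : PowerSeries ℚ)) =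
        h n / (Nat.factorial n : ℚ) := by
  obtain ⟨k, H⟩ := H
  obtain ⟨c, N, hN⟩ := H.choose
  let p : Polynomial ℚ := ∑ j ∈ Finset.range k, Polynomial.monomial j (c j / (j.factorial : ℚ))
  let r : ℕ → ℚ := fun n => h n / (Nat.factorial n : ℚ) -
    PowerSeries.coeff n ((p : PowerSeries ℚ) * PowerSeries.exp ℚ)
  let q : Polynomial ℚ := ∑ j ∈ Finset.range N, Polynomial.monomial j (r j)
  refine ⟨p, q, fun n => ?_⟩
  have hq : PowerSeries.coeff n (q : PowerSeries ℚ) = if n < N then r n else 0 := by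
    rw [Polynomial.coeff_coe]
    simp [q, Polynomial.coeff_monomial]
  rw [map_add, hq]
  split_ifs with hn
  · simp [r]
  · rw [hN n (by omega), add_zero]
    have hp : (p : PowerSeries ℚ) = ∑ j ∈ Finset.range k, PowerSeries.monomial j (c j / (j.factorial : ℚ)) := by
      ext m
      rw [Polynomial.coeff_coe, map_sum]
      simp [p, Polynomial.coeff_monomial, PowerSeries.coeff_monomial, eq_comm]
    rw [hp, Finset.sum_mul, map_sum, Finset.sum_div]
    refine Finset.sum_congr rfl fun j _ => ?_
    have hX : PowerSeries.monomial j (c j / (j.factorial : ℚ)) =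
        PowerSeries.C (c j / (j.factorial : ℚ)) * PowerSeries.X ^ j := by
      ext m
      rw [PowerSeries.coeff_C_mul_X_pow, PowerSeries.coeff_monomial]
    rw [hX, mul_assoc, PowerSeries.coeff_C_mul, PowerSeries.coeff_X_pow_mul']
    split_ifs with hj
    · rw [PowerSeries.coeff_exp, Nat.cast_choose ℚ hj]
      have h1 : (n.factorial : ℚ) ≠ 0 := by exact_mod_cast n.factorial_ne_zero
      have h2 : (j.factorial : ℚ) ≠ 0 := by exact_mod_cast j.factorial_ne_zero
      have h3 : ((n-j).factorial : ℚ) ≠ 0 := by exact_mod_cast (n-j).factorial_ne_zero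
      simp
      field_simp
    · rw [Nat.choose_eq_zero_of_lt (by omega)]
      simp

theorem chain_stab {α : Type*} [Preorder α] [WellQuasiOrderedLE α] (U : ℕ → Set α)
    (hU : ∀ i, IsUpperSet (U i)) (hm : Monotone U) : ∃ s, ∀ i ≥ s, U i = U s := by
  by_contra hc
  push Not at hc
  have : ∀ s, ∃ i, s ≤ i ∧ ∃ x, x ∈ U i ∧ x ∉ U s := by
    intro s
    obtain ⟨i, hi, hne⟩ := hc s
    refine ⟨i, hi, ?_⟩
    by_contra h
    push Not at h
    exact hne (Set.Subset.antisymm h (hm hi))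
  choose nx h1 x h2 h3 using this
  let t : ℕ → ℕ := fun n => nx^[n] 0
  have ht : Monotone t := monotone_nat_of_le_succ fun n => by
    simp only [t, Function.iterate_succ_apply']
    exact h1 _
  obtain ⟨m, n, hmn, hle⟩ := WellQuasiOrderedLE.wqo (α := α) (fun n => x (t n))
  apply h3 (t n)
  have : t (m+1) ≤ t n := ht hmn
  refine hm this (hU _ hle ?_)
  simp only [t, Function.iterate_succ_apply']
  exact h2 _

open Classical in
noncomputable def cnt {k : ℕ} (U : Set (Fin k → ℕ)) (n : ℕ) : ℕ :=
  ((Finset.Nat.antidiagonalTuple k n).filter (fun v => v ∉ U)).card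

theorem cnt_succ {k : ℕ} (U : Set (Fin (k+1) → ℕ)) (n : ℕ) :
    cnt U n = ∑ i ∈ Finset.range (n+1), cnt {w | Fin.cons i w ∈ U} (n - i) := by
  classical
  unfold cnt
  rw [Finset.card_eq_sum_card_fiberwise (f := fun v => v 0) (t := Finset.range (n+1))]
  · refine Finset.sum_congr rfl fun i hi => ?_
    rw [Finset.mem_range] at hi
    refine Finset.card_nbij' (fun v => Fin.tail v) (fun w => Fin.cons i w) ?_ ?_ ?_ ?_
    · intro v
      simp only [Finset.coe_filter, Finset.mem_filter, Finset.Nat.mem_antidiagonalTuple, Set.mem_ofPred_eq, Fin.sum_univ_succ]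
      rintro ⟨⟨h1, h2⟩, rfl⟩
      refine ⟨?_, by simpa using h2⟩
      simp only [Fin.tail]
      omega
    · intro w
      simp only [Finset.coe_filter, Finset.mem_filter, Finset.Nat.mem_antidiagonalTuple, Set.mem_ofPred_eq, Fin.sum_univ_succ, Fin.cons_zero, Fin.cons_succ]
      rintro ⟨h1, h2⟩
      exact ⟨⟨by omega, h2⟩, trivial⟩
    · intro v
      simp only [Finset.coe_filter, Finset.mem_filter, Set.mem_ofPred_eq]
      rintro ⟨_, rfl⟩
      simp
    · intro w _
      simp
  · intro v
    simp only [Finset.coe_filter, Finset.Nat.mem_antidiagonalTuple, Set.mem_ofPred_eq, Fin.sum_univ_succ, Finset.coe_range, Set.mem_Iio]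
    rintro ⟨h, _⟩
    omega

theorem EP_cnt {k : ℕ} : ∀ (U : Set (Fin k → ℕ)), IsUpperSet U → EP (fun n => (cnt U n : ℚ)) := by
  induction k with
  | zero =>
    intro U _
    refine EP.zero.congr 1 fun n hn => ?_
    obtain ⟨m, rfl⟩ : ∃ m, n = m + 1 := ⟨n-1, by omega⟩
    simp [cnt]
  | succ k ih =>
    intro U hU
    let V : ℕ → Set (Fin k → ℕ) := fun i => {w | (Fin.cons i w : Fin (k+1) → ℕ) ∈ U}
    have hV : ∀ i, IsUpperSet (V i) := fun i a b hab ha =>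
      hU (Fin.cons_le_cons.2 ⟨le_rfl, hab⟩) ha
    have hm : Monotone V := fun i j hij a ha => hU (Fin.cons_le_cons.2 ⟨hij, le_rfl⟩) ha
    obtain ⟨s, hs⟩ := chain_stab V hV hm
    have E1 : EP (fun n => ∑ i ∈ Finset.range s, (cnt (V i) (n - i) : ℚ)) :=
      EP.finset_sum _ _ fun i _ => (ih _ (hV i)).shift i
    have E2 : EP (fun n => ∑ j ∈ Finset.range (n + 1 - s), (cnt (V s) j : ℚ)) := by
      refine ((ih _ (hV s)).sum.add (ih _ (hV s)) |>.shift s).congr s fun n hn => ?_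
      rw [show n + 1 - s = n - s + 1 by omega, Finset.sum_range_succ]
    refine (E1.add E2).congr s fun n hn => ?_
    rw [cnt_succ, show n + 1 = s + (n + 1 - s) by omega, Finset.sum_range_add]
    push_cast
    congr 1
    rw [show s + (n + 1 - s) - s = n + 1 - s by omega, ← Finset.sum_range_reflect]
    refine Finset.sum_congr rfl fun j hj => ?_
    rw [Finset.mem_range] at hj
    have := hs (s + j) (by omega)
    simp only [V] at this ⊢
    rw [this, show n + 1 - s - 1 - j = n - (s + j) by omega]

theorem finrank_std {X V : Type*} [LinearOrder X] [AddCommGroup V] [Module ℂ V]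
    [FiniteDimensional ℂ V] (e : X → V) (s : Finset X) :
    open Classical in
    Module.finrank ℂ (Submodule.span ℂ (e '' (s : Set X))) =
      (s.filter (fun x => e x ∉ Submodule.span ℂ (e '' {y | y ∈ s ∧ y < x}))).card := by
  classical
  induction s using Finset.induction_on_max with
  | empty => simp
  | insert a s ha ih =>
    have has : a ∉ s := fun h => lt_irrefl _ (ha a h)
    have h1 : ∀ x ∈ s, {y | y ∈ insert a s ∧ y < x} = {y | y ∈ s ∧ y < x} := by
      intro x hx
      ext y
      simp only [Finset.mem_insert, Set.mem_ofPred_eq]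
      constructor
      · rintro ⟨rfl | h, h2⟩
        · exact absurd h2 (ha x hx).not_gt
        · exact ⟨h, h2⟩
      · rintro ⟨h, h2⟩
        exact ⟨Or.inr h, h2⟩
    have h2 : {y | y ∈ insert a s ∧ y < a} = (s : Set X) := by
      ext y
      simp only [Finset.mem_insert, Set.mem_ofPred_eq, Finset.mem_coe]
      constructor
      · rintro ⟨rfl | h, h2⟩
        · exact absurd h2 (lt_irrefl _)
        · exact h
      · intro h
        exact ⟨Or.inr h, ha y h⟩
    have h3 : s.filter (fun x => e x ∉ Submodule.span ℂ (e '' {y | y ∈ insert a s ∧ y < x})) =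
        s.filter (fun x => e x ∉ Submodule.span ℂ (e '' {y | y ∈ s ∧ y < x})) := by
      refine Finset.filter_congr fun x hx => ?_
      rw [h1 x hx]
    rw [Finset.filter_insert, h3, h2, Finset.coe_insert, Set.image_insert_eq, Submodule.span_insert,
      sup_comm]
    split_ifs with h
    · rw [sup_eq_left.2, ih]
      rwa [Submodule.span_singleton_le_iff_mem]
    · rw [Submodule.finrank_sup_span_singleton h, Finset.card_insert_of_notMem (by simp [has]), ih]

def vpos {d : ℕ} (v : Fin (d+1) → ℕ) (i : Fin d) : ℕ :=
  i + ∑ l : Fin (d+1), if (l : ℕ) ≤ i then v l else 0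

theorem vpos_strictMono {d : ℕ} (v : Fin (d+1) → ℕ) : StrictMono (vpos v) := by
  intro i j hij
  unfold vpos
  refine add_lt_add_of_lt_of_le hij (Finset.sum_le_sum fun l _ => ?_)
  have : (i : ℕ) < j := hij
  split_ifs <;> omega

theorem vpos_lt {d : ℕ} (v : Fin (d+1) → ℕ) (i : Fin d) : vpos v i < d + ∑ l, v l := by
  unfold vpos
  refine add_lt_add_of_lt_of_le i.2 (Finset.sum_le_sum fun l _ => ?_)
  split_ifs <;> omega

theorem vpos_castSucc {d : ℕ} (v : Fin (d+2) → ℕ) (i : Fin d) :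
    vpos v i.castSucc = vpos (Fin.init v) i := by
  have := i.2
  unfold vpos
  rw [Fin.sum_univ_castSucc]
  simp [Fin.init]

theorem vpos_last {d : ℕ} (v : Fin (d+2) → ℕ) :
    vpos v (Fin.last d) = d + ∑ l, Fin.init v l := by
  unfold vpos
  rw [Fin.sum_univ_castSucc]
  simp [Fin.init]
  refine Finset.sum_congr rfl fun l _ => ?_
  rw [if_pos (by omega)]

theorem vpos_inj {d : ℕ} : ∀ (v w : Fin (d+1) → ℕ), vpos v = vpos w →
    ∑ l, v l = ∑ l, w l → v = w := by
  induction d with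
  | zero =>
    intro v w _ h
    ext i
    rw [Fin.eq_zero i]
    simpa using h
  | succ d ih =>
    intro v w h h2
    have hl := congrFun h (Fin.last d)
    rw [vpos_last, vpos_last] at hl
    have hi : Fin.init v = Fin.init w := by
      refine ih _ _ ?_ (by omega)
      ext i
      rw [← vpos_castSucc, ← vpos_castSucc, h]
    rw [Fin.sum_univ_castSucc, Fin.sum_univ_castSucc w] at h2
    simp only [Fin.init] at hl
    rw [← Fin.snoc_init_self v, ← Fin.snoc_init_self w, hi]
    congr 1
    omega

theorem vpos_surj {d : ℕ} : ∀ (n : ℕ) (f : Fin d → ℕ), StrictMono f → (∀ i, f i < n) →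
    ∃ v, d + ∑ l, v l = n ∧ vpos v = f := by
  induction d with
  | zero =>
    intro n f _ _
    exact ⟨fun _ => n, by simp, Subsingleton.elim _ _⟩
  | succ d ih =>
    intro n f hf hn
    obtain ⟨v, hv, hv2⟩ := ih (f (Fin.last d)) (fun i => f i.castSucc)
      (fun i j hij => hf (by simpa using hij)) (fun i => hf (Fin.castSucc_lt_last i))
    have := hn (Fin.last d)
    refine ⟨Fin.snoc v (n - f (Fin.last d) - 1), ?_, ?_⟩
    · rw [Fin.sum_univ_castSucc]
      simp
      omega
    · ext i
      refine Fin.lastCases ?_ (fun i => ?_) i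
      · rw [vpos_last, Fin.init_snoc, hv]
      · rw [vpos_castSucc, Fin.init_snoc, hv2]

def ins (p m : ℕ) : ℕ := if m < p then m else m + 1

theorem ins_strictMono (p : ℕ) : StrictMono (ins p) := by
  intro a b hab
  unfold ins
  split_ifs <;> omega

theorem ins_lt {p m n : ℕ} (h : m < n) : ins p m < n + 1 := by
  unfold ins
  split_ifs <;> omega

theorem vpos_add_single {d : ℕ} (v : Fin (d+1) → ℕ) (l : Fin (d+1)) :
    ∃ p, vpos (v + Pi.single l 1) = ins p ∘ vpos v := by
  have key : ∀ i : Fin d, vpos (v + Pi.single l 1) i = vpos v i + if (l : ℕ) ≤ i then 1 else 0 := by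
    intro i
    unfold vpos
    rw [add_assoc]
    congr 1
    have : (if (l : ℕ) ≤ i then 1 else 0) =
        ∑ x : Fin (d+1), if x = l then (if (l : ℕ) ≤ i then 1 else 0) else 0 := by simp
    rw [this, ← Finset.sum_add_distrib]
    refine Finset.sum_congr rfl fun x _ => ?_
    by_cases hx : x = l
    · subst hx
      simp
      split_ifs <;> simp
    · simp [hx]
  refine Fin.lastCases (motive := fun l => (∀ i : Fin d, vpos (v + Pi.single l 1) i = vpos v i + if (l : ℕ) ≤ i then 1 else 0) → ∃ p, vpos (v + Pi.single l 1) = ins p ∘ vpos v) ?_ ?_ l key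
  · intro key
    refine ⟨d + ∑ l, v l, ?_⟩
    ext i
    rw [key, Function.comp_apply, ins, if_pos (vpos_lt v i), if_neg]
    · simp
    · have := i.2
      simp
  · intro l key
    refine ⟨vpos v l, ?_⟩
    ext i
    rw [key, Function.comp_apply, ins]
    simp only [(vpos_strictMono v).lt_iff_lt, Fin.val_castSucc, Fin.lt_def]
    split_ifs <;> omega

theorem isUpperSet_of_single {k : ℕ} (U : Set (Fin k → ℕ))
    (h : ∀ v ∈ U, ∀ l, v + Pi.single l 1 ∈ U) : IsUpperSet U := by
  have : ∀ (n : ℕ) (v w : Fin k → ℕ), v ∈ U → v ≤ w → ∑ l, w l = ∑ l, v l + n → w ∈ U := by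
    intro n
    induction n with
    | zero =>
      intro v w hv hvw hs
      have : v = w := by
        ext l
        have := (Finset.sum_eq_sum_iff_of_le (s := Finset.univ) (fun i _ => hvw i)).1 (by omega)
        exact this l (Finset.mem_univ _)
      rwa [← this]
    | succ n ih =>
      intro v w hv hvw hs
      obtain ⟨l, hl⟩ : ∃ l, v l < w l := by
        by_contra hc
        push Not at hc
        have := Finset.sum_le_sum (s := Finset.univ) (fun i _ => hc i)
        omega
      refine ih (v + Pi.single l 1) w (h v hv l) ?_ ?_
      · intro i
        by_cases hi : i = l
        · subst hi
          simpa using hl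
        · simpa [hi] using hvw i
      · simp [Finset.sum_add_distrib]
        omega
  intro v w hvw hv
  have hs := Finset.sum_le_sum (s := Finset.univ) (fun i _ => hvw i)
  exact this (∑ l, w l - ∑ l, v l) v w hv hvw (by omega)

/-- ordered generation -/
def OIGen (M : FIMod) {K : ℕ} (d : Fin K → ℕ) (g : ∀ j, M.obj (FIObj.of (Fin (d j)))) : Prop :=
  ∀ n : ℕ, Submodule.span ℂ {y : M.obj (FIObj.of (Fin n)) | ∃ (j : Fin K)
    (f : FIObj.of (Fin (d j)) ⟶ FIObj.of (Fin n)), StrictMono (α := Fin (d j)) (β := Fin n) f.1 ∧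
      y = M.map f (g j)} = ⊤

theorem exists_factor {α : Type} [Fintype α] {n : ℕ} (f : α → Fin n) (hf : Function.Injective f) :
    ∃ (σ : α ≃ Fin (Fintype.card α)) (e : Fin (Fintype.card α) → Fin n), StrictMono e ∧
      f = e ∘ σ := by
  classical
  let s : Finset (Fin n) := Finset.univ.image f
  have hs : s.card = Fintype.card α := by
    rw [Finset.card_image_of_injective _ hf, Finset.card_univ]
  let o := s.orderIsoOfFin hs
  let t : α → s := fun a => ⟨f a, Finset.mem_image_of_mem _ (Finset.mem_univ _)⟩
  have ht : Function.Bijective t := by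
    constructor
    · intro a b hab
      exact hf (congrArg Subtype.val hab)
    · rintro ⟨x, hx⟩
      obtain ⟨a, _, rfl⟩ := Finset.mem_image.1 hx
      exact ⟨a, rfl⟩
  refine ⟨(Equiv.ofBijective t ht).trans o.symm.toEquiv, fun i => (o i : Fin n), ?_, ?_⟩
  · intro i j hij
    exact o.strictMono hij
  · ext a
    simp [t]

theorem exists_OIGen (M : FIMod) (hM : FIMod.FG M) : ∃ (K : ℕ) (d : Fin K → ℕ)
    (g : ∀ j, M.obj (FIObj.of (Fin (d j)))), OIGen M d g := by
  classical
  obtain ⟨k, S, m, h⟩ := hM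
  let J := Σ i : Fin k, ((S i).α ≃ Fin (Fintype.card (S i).α))
  let φ : Fin (Fintype.card J) ≃ J := (Fintype.equivFin J).symm
  let hom : ∀ x : J, S x.1 ⟶ FIObj.of (Fin (Fintype.card (S x.1).α)) := fun x =>
    ⟨x.2, x.2.injective⟩
  refine ⟨Fintype.card J, fun j => Fintype.card (S (φ j).1).α, fun j => M.map (hom (φ j)) (m (φ j).1),
    fun n => ?_⟩
  let N : FISub M :=
    { carrier := fun T => Submodule.span ℂ {y | ∃ (i : Fin k) (f : S i ⟶ T), y = M.map f (m i)}
      map_mem := by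
        intro A B f x hx
        have : Submodule.span ℂ {y | ∃ (i : Fin k) (f : S i ⟶ A), y = M.map f (m i)} ≤
          (Submodule.span ℂ {y | ∃ (i : Fin k) (f : S i ⟶ B), y = M.map f (m i)}).comap
            (M.map f).hom := by
          rw [Submodule.span_le]
          rintro _ ⟨i, f', rfl⟩
          refine Submodule.subset_span ⟨i, f' ≫ f, ?_⟩
          simp
        exact this hx }
  have hN := h N (fun i => Submodule.subset_span ⟨i, 𝟙 _, by simp⟩) (FIObj.of (Fin n))
  rw [eq_top_iff, ← hN]
  refine Submodule.span_mono ?_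
  rintro _ ⟨i, f, rfl⟩
  obtain ⟨σ, e, he, hfe⟩ := exists_factor (n := n) f.1 f.2
  obtain ⟨j, hj⟩ := φ.surjective ⟨i, σ⟩
  have key : ∀ (x : J) (hx : x = ⟨i, σ⟩), ∃ f' : FIObj.of (Fin (Fintype.card (S x.1).α)) ⟶ FIObj.of (Fin n),
      StrictMono (α := Fin (Fintype.card (S x.1).α)) (β := Fin n) f'.1 ∧
      M.map f (m i) = M.map f' (M.map (hom x) (m x.1)) := by
    rintro _ rfl
    let e' : FIObj.of (Fin (Fintype.card (S i).α)) ⟶ FIObj.of (Fin n) := ⟨e, he.injective⟩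
    refine ⟨e', he, ?_⟩
    have : f = hom ⟨i, σ⟩ ≫ e' := Subtype.ext hfe
    conv_lhs => rw [this]
    simp
  obtain ⟨f', h1, h2⟩ := key _ hj
  exact ⟨j, f', h1, h2⟩

noncomputable def elt (M : FIMod) {K : ℕ} (d : Fin K → ℕ) (g : ∀ j, M.obj (FIObj.of (Fin (d j))))
    (n : ℕ) (j : Fin K) (f : Fin (d j) → ℕ) : M.obj (FIObj.of (Fin n)) :=
  open Classical in
  if h : StrictMono f ∧ ∀ i, f i < n then
    M.map (X := FIObj.of (Fin (d j))) (Y := FIObj.of (Fin n)) ⟨fun i => (⟨f i, h.2 i⟩ : Fin n),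
      fun _ _ hab => h.1.injective (congrArg Fin.val hab)⟩ (g j)
  else 0

def homN {n m : ℕ} (γ : ℕ → ℕ) (h1 : StrictMono γ) (h2 : ∀ i < n, γ i < m) :
    FIObj.of (Fin n) ⟶ FIObj.of (Fin m) :=
  ⟨fun i : Fin n => (⟨γ i.1, h2 _ i.2⟩ : Fin m), fun _ _ hab =>
    Fin.ext (h1.injective (congrArg Fin.val hab))⟩

theorem map_elt (M : FIMod) {K : ℕ} (d : Fin K → ℕ) (g : ∀ j, M.obj (FIObj.of (Fin (d j))))
    {n m : ℕ} (γ : ℕ → ℕ) (h1 : StrictMono γ) (h2 : ∀ i < n, γ i < m) (j : Fin K)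
    (f : Fin (d j) → ℕ) (hf : StrictMono f ∧ ∀ i, f i < n) :
    M.map (homN γ h1 h2) (elt M d g n j f) = elt M d g m j (γ ∘ f) := by
  have hf' : StrictMono (γ ∘ f) ∧ ∀ i, (γ ∘ f) i < m := ⟨h1.comp hf.1, fun i => h2 _ (hf.2 i)⟩
  unfold elt
  rw [dif_pos hf, dif_pos hf', ← ModuleCat.comp_apply, ← M.map_comp]
  rfl

abbrev XX {K : ℕ} (d : Fin K → ℕ) := Σₗ j : Fin K, Lex (Fin (d j) → ℕ)

def XX.mk {K : ℕ} {d : Fin K → ℕ} (j : Fin K) (f : Fin (d j) → ℕ) : XX d := toLex ⟨j, toLex f⟩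
def XX.idx {K : ℕ} {d : Fin K → ℕ} (x : XX d) : Fin K := (ofLex x).1
def XX.fn {K : ℕ} {d : Fin K → ℕ} (x : XX d) : Fin (d x.idx) → ℕ := ofLex (ofLex x).2

theorem XX.mk_fn {K : ℕ} {d : Fin K → ℕ} (x : XX d) : XX.mk x.idx x.fn = x := rfl

def XX.act {K : ℕ} {d : Fin K → ℕ} (γ : ℕ → ℕ) (x : XX d) : XX d := XX.mk x.idx (γ ∘ x.fn)

theorem XX.act_lt {K : ℕ} {d : Fin K → ℕ} (γ : ℕ → ℕ) (hγ : StrictMono γ) {x y : XX d}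
    (h : x < y) : x.act γ < y.act γ := by
  rw [Sigma.Lex.lt_def] at h ⊢
  obtain ⟨i, x⟩ := x
  obtain ⟨j, y⟩ := y
  rcases h with h | ⟨h, h'⟩
  · exact Or.inl h
  · change i = j at h
    subst h
    refine Or.inr ⟨rfl, ?_⟩
    obtain ⟨l, h1, h2⟩ := h'
    exact ⟨l, fun t ht => congrArg γ (h1 t ht), hγ h2⟩

noncomputable def EE (M : FIMod) {K : ℕ} (d : Fin K → ℕ) (g : ∀ j, M.obj (FIObj.of (Fin (d j))))
    (n : ℕ) (x : XX d) : M.obj (FIObj.of (Fin n)) := elt M d g n x.idx x.fn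

def NS (M : FIMod) {K : ℕ} (d : Fin K → ℕ) (g : ∀ j, M.obj (FIObj.of (Fin (d j))))
    (n : ℕ) (x : XX d) : Prop := EE M d g n x ∈ Submodule.span ℂ (EE M d g n '' Set.Iio x)

theorem valid_of_ne {M : FIMod} {K : ℕ} {d : Fin K → ℕ} {g : ∀ j, M.obj (FIObj.of (Fin (d j)))}
    {n : ℕ} {x : XX d} (h : EE M d g n x ≠ 0) : StrictMono x.fn ∧ ∀ i, x.fn i < n := by
  by_contra hc
  exact h (dif_neg hc)

theorem NS_act (M : FIMod) {K : ℕ} (d : Fin K → ℕ) (g : ∀ j, M.obj (FIObj.of (Fin (d j))))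
    {n m : ℕ} (γ : ℕ → ℕ) (h1 : StrictMono γ) (h2 : ∀ i < n, γ i < m) (x : XX d)
    (hx : StrictMono x.fn ∧ ∀ i, x.fn i < n) (h : NS M d g n x) : NS M d g m (x.act γ) := by
  have hle : Submodule.span ℂ (EE M d g n '' Set.Iio x) ≤
      (Submodule.span ℂ (EE M d g m '' Set.Iio (x.act γ))).comap (M.map (homN γ h1 h2)).hom := by
    rw [Submodule.span_le]
    rintro _ ⟨y, hy, rfl⟩
    by_cases h0 : EE M d g n y = 0
    · rw [h0]
      exact Submodule.zero_mem _
    · exact Submodule.subset_span ⟨y.act γ, XX.act_lt γ h1 hy,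
        (map_elt M d g γ h1 h2 _ _ (valid_of_ne h0)).symm⟩
  have := hle h
  rw [Submodule.mem_comap] at this
  have e := map_elt M d g γ h1 h2 _ _ hx
  unfold NS
  change elt M d g m x.idx (γ ∘ x.fn) ∈ _
  rw [← e]
  exact this

theorem isUpperSet_NS (M : FIMod) {K : ℕ} (d : Fin K → ℕ) (g : ∀ j, M.obj (FIObj.of (Fin (d j))))
    (j : Fin K) : IsUpperSet {v : Fin (d j + 1) → ℕ |
      NS M d g (d j + ∑ l, v l) (XX.mk j (vpos v))} := by
  refine isUpperSet_of_single _ fun v hv l => ?_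
  obtain ⟨p, hp⟩ := vpos_add_single v l
  have := NS_act M d g (m := d j + ∑ l, v l + 1) (ins p) (ins_strictMono p) (fun i hi => ins_lt hi)
    (XX.mk j (vpos v))
    ⟨vpos_strictMono v, vpos_lt v⟩ hv
  have e : d j + ∑ i, (v + Pi.single l 1 : Fin (d j + 1) → ℕ) i = d j + ∑ l, v l + 1 := by
    simp [Finset.sum_add_distrib]
    ring
  change NS M d g (d j + ∑ i, (v + Pi.single l 1 : Fin (d j + 1) → ℕ) i) (XX.mk j (vpos (v + Pi.single l 1)))
  rw [e, hp]
  exact this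

open Classical in
noncomputable def allX {K : ℕ} (d : Fin K → ℕ) (n : ℕ) : Finset (XX d) :=
  (Finset.univ : Finset (Σ j : Fin K, Fin (d j) → Fin n)).image
    (fun x => XX.mk x.1 (fun i => (x.2 i : ℕ)))

theorem mem_allX {K : ℕ} {d : Fin K → ℕ} {n : ℕ} (x : XX d) (h : ∀ i, x.fn i < n) :
    x ∈ allX d n := by
  unfold allX
  rw [Finset.mem_image]
  exact ⟨⟨x.idx, fun i => ⟨x.fn i, h i⟩⟩, Finset.mem_univ _, rfl⟩

theorem span_allX {M : FIMod} {K : ℕ} {d : Fin K → ℕ} {g : ∀ j, M.obj (FIObj.of (Fin (d j)))}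
    (h : OIGen M d g) (n : ℕ) :
    Submodule.span ℂ (EE M d g n '' (allX d n : Set (XX d))) = ⊤ := by
  rw [eq_top_iff, ← h n]
  refine Submodule.span_mono ?_
  rintro _ ⟨j, f, hf, rfl⟩
  let f' : Fin (d j) → Fin n := f.1
  have hv : StrictMono (fun i : Fin (d j) => (f' i : ℕ)) ∧
    ∀ i : Fin (d j), (f' i : ℕ) < n := ⟨fun a b hab => hf hab, fun i => (f' i).2⟩
  refine ⟨XX.mk j (fun i => (f' i : ℕ)), mem_allX _ hv.2, ?_⟩
  exact dif_pos hv

theorem findim {M : FIMod} {K : ℕ} {d : Fin K → ℕ} {g : ∀ j, M.obj (FIObj.of (Fin (d j)))}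
    (h : OIGen M d g) (n : ℕ) : FiniteDimensional ℂ (M.obj (FIObj.of (Fin n))) := by
  refine Module.finite_def.2 ?_
  rw [← span_allX h n]
  exact Submodule.fg_span ((Finset.finite_toSet _).image _)

open Classical in
theorem finrank_eq {M : FIMod} {K : ℕ} {d : Fin K → ℕ} {g : ∀ j, M.obj (FIObj.of (Fin (d j)))}
    (h : OIGen M d g) (n : ℕ) : Module.finrank ℂ (M.obj (FIObj.of (Fin n))) =
      ((allX d n).filter (fun x => ¬ NS M d g n x)).card := by
  have := findim h n
  rw [← finrank_top ℂ (M.obj (FIObj.of (Fin n))), ← span_allX h n, finrank_std]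
  congr 1
  refine Finset.filter_congr fun x _ => ?_
  unfold NS
  have : Submodule.span ℂ (EE M d g n '' {y | y ∈ allX d n ∧ y < x}) =
      Submodule.span ℂ (EE M d g n '' Set.Iio x) := by
    apply le_antisymm
    · exact Submodule.span_mono (Set.image_mono fun y hy => hy.2)
    · rw [Submodule.span_le]
      rintro _ ⟨y, hy, rfl⟩
      by_cases h0 : EE M d g n y = 0
      · rw [h0]
        exact Submodule.zero_mem _
      · exact Submodule.subset_span ⟨y, ⟨mem_allX _ (valid_of_ne h0).2, hy⟩, rfl⟩
  rw [this]

theorem finrank_cnt {M : FIMod} {K : ℕ} {d : Fin K → ℕ} {g : ∀ j, M.obj (FIObj.of (Fin (d j)))}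
    (h : OIGen M d g) (n : ℕ) (hn : ∀ j, d j ≤ n) : Module.finrank ℂ (M.obj (FIObj.of (Fin n))) =
      ∑ j, cnt {v : Fin (d j + 1) → ℕ | NS M d g (d j + ∑ l, v l) (XX.mk j (vpos v))} (n - d j) := by
  classical
  rw [finrank_eq h, Finset.card_eq_sum_card_fiberwise (f := XX.idx) (t := Finset.univ) (by simp)]
  refine Finset.sum_congr rfl fun j _ => ?_
  symm
  have hj := hn j
  unfold cnt
  refine Finset.card_nbij (fun v => XX.mk j (vpos v)) ?_ ?_ ?_
  · intro v
    simp only [Finset.coe_filter, Finset.mem_filter, Finset.Nat.mem_antidiagonalTuple, Set.mem_ofPred_eq]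
    rintro ⟨h1, h2⟩
    have e : d j + ∑ l, v l = n := by omega
    rw [e] at h2
    refine ⟨⟨mem_allX _ fun i => ?_, h2⟩, rfl⟩
    exact e ▸ vpos_lt v i
  · intro v hv w hw hvw
    simp only [Finset.coe_filter, Finset.Nat.mem_antidiagonalTuple, Set.mem_ofPred_eq] at hv hw
    refine vpos_inj v w ?_ (by omega)
    have := congrArg ofLex hvw
    simp only [XX.mk, ofLex_toLex] at this
    exact eq_of_heq (Sigma.mk.inj this).2
  · intro x
    simp only [Finset.coe_filter, Finset.mem_filter, Finset.Nat.mem_antidiagonalTuple, Set.mem_ofPred_eq]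
    rintro ⟨⟨h1, h2⟩, rfl⟩
    have h0 : EE M d g n x ≠ 0 := fun h0 => h2 (by
      unfold NS
      rw [h0]
      exact Submodule.zero_mem _)
    obtain ⟨v, hv1, hv2⟩ := vpos_surj n x.fn (valid_of_ne h0).1 (valid_of_ne h0).2
    refine ⟨v, ?_, ?_⟩
    · simp only [Set.mem_ofPred_eq]
      refine ⟨by omega, ?_⟩
      rw [hv1, hv2]
      exact h2
    · simp only [hv2]
      rfl

theorem EP_finrank {M : FIMod} {K : ℕ} {d : Fin K → ℕ} {g : ∀ j, M.obj (FIObj.of (Fin (d j)))}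
    (h : OIGen M d g) : EP (fun n => (Module.finrank ℂ (M.obj (FIObj.of (Fin n))) : ℚ)) := by
  refine (EP.finset_sum Finset.univ _ fun j _ =>
    (EP_cnt _ (isUpperSet_NS M d g j)).shift (d j)).congr (∑ j, d j) fun n hn => ?_
  rw [finrank_cnt h n fun j => ?_]
  · push_cast
    rfl
  · exact (Finset.single_le_sum (f := d) (fun _ _ => Nat.zero_le _) (Finset.mem_univ j)).trans hn

/-- For a finitely generated FI-module M each `M_n` is finite
dimensional, and the exponential Hilbert series `Σ dim(M_n) tⁿ/n!` equals
`p(t)·eᵗ + q(t)` for polynomials p, q with rational coefficients. -/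
theorem fg_FIMod_hilbert_series (M : FIMod) (hM : FIMod.FG M) :
    (∀ n : ℕ, FiniteDimensional ℂ (M.obj (FIObj.of (Fin n)))) ∧
    ∃ p q : Polynomial ℚ, ∀ n : ℕ,
      PowerSeries.coeff n
          ((p : PowerSeries ℚ) * PowerSeries.exp ℚ + (q : PowerSeries ℚ)) =
        (Module.finrank ℂ (M.obj (FIObj.of (Fin n))) : ℚ) / (Nat.factorial n : ℚ) := by
  obtain ⟨K, d, g, h⟩ := exists_OIGen M hM
  exact ⟨findim h, (EP_finrank h).series⟩
end

section
/- Let I be an FI-module over ℂ of finite length, i.e. each I(S) is finite-dimensional and I(S) = 0 whenever |S| is sufficiently large, and suppose I is injective in the category of finite-length FI-modules: every morphism into I from a finite-length FI-module X extends along any pointwise-injective morphism from X into a finite-length FI-module Y. Then I is injective in the category of finitely generated FI-modules: for every morphism i : X → Y of finitely generated FI-modules with each i_S injective and every morphism f : X → I, there exists g : Y → I with g ∘ i = f. -/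
open CategoryTheory

/-- Finite length FI-modules: pointwise finite dimensional and vanishing on all
sufficiently large finite sets. -/
def FIMod.FiniteLength (M : FIMod) : Prop :=
  (∀ S : FIObj, FiniteDimensional ℂ (M.obj S)) ∧
    ∃ N : ℕ, ∀ S : FIObj, N ≤ Fintype.card S.α → ∀ x : (M.obj S), x = 0

open CategoryTheory

theorem FIObj.card_le {S T : FIObj} (f : S ⟶ T) : Fintype.card S.α ≤ Fintype.card T.α :=
  Fintype.card_le_of_injective f.1 f.2

instance FIObj.finite_hom (S T : FIObj) : Finite (S ⟶ T) :=
  inferInstanceAs (Finite {f : S.α → T.α // Function.Injective f})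

theorem FIMod.FG.finite {M : FIMod} (h : M.FG) (T : FIObj) :
    FiniteDimensional ℂ (M.obj T) := by
  obtain ⟨k, S, m, hm⟩ := h
  let N : FISub M :=
    { carrier := fun T => Submodule.span ℂ
        (Set.range (fun p : (Σ i : Fin k, (S i ⟶ T)) => M.map p.2 (m p.1)))
      map_mem := by
        intro A B f x hx
        induction hx using Submodule.span_induction with
        | mem x hx =>
          obtain ⟨⟨i, g⟩, rfl⟩ := hx
          apply Submodule.subset_span
          exact ⟨⟨i, g ≫ f⟩, by simp⟩
        | zero => simp
        | add x y _ _ hx hy => rw [map_add]; exact Submodule.add_mem _ hx hy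
        | smul a x _ hx => rw [map_smul]; exact Submodule.smul_mem _ _ hx }
  have h1 := hm N (fun i => Submodule.subset_span ⟨⟨i, 𝟙 _⟩, by simp⟩) T
  exact ⟨by rw [← h1]; exact Submodule.fg_span (Set.finite_range _)⟩

/-- Truncation: kills everything in degrees at least `n`. -/
def FIMod.trunc (n : ℕ) (M : FIMod) : FIMod where
  obj S := ModuleCat.of ℂ (PLift (Fintype.card S.α < n) → M.obj S)
  map {S T} f := ModuleCat.ofHom
    { toFun := fun φ h => M.map f (φ ⟨lt_of_le_of_lt (FIObj.card_le f) h.down⟩)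
      map_add' := by intro x y; funext h; simp
      map_smul' := by intro x y; funext h; simp }
  map_id S := by
    refine ModuleCat.hom_ext (LinearMap.ext fun φ => funext fun h => ?_)
    change M.map (𝟙 S) (φ h) = φ h
    simp
  map_comp f g := by
    refine ModuleCat.hom_ext (LinearMap.ext fun φ => funext fun h => ?_)
    change M.map (f ≫ g) (φ _) = M.map g (M.map f (φ _))
    simp

theorem FIMod.trunc_finiteLength (n : ℕ) {M : FIMod} (hM : M.FG) :
    (M.trunc n).FiniteLength := by
  refine ⟨fun S => ?_, n, fun S hS x => ?_⟩
  · have := hM.finite S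
    exact inferInstanceAs (Module.Finite ℂ (PLift (Fintype.card S.α < n) → M.obj S))
  · funext h
    exact absurd h.down (not_lt.mpr hS)

def FIMod.toTrunc (n : ℕ) (M : FIMod) : M ⟶ M.trunc n where
  app S := ModuleCat.ofHom
    { toFun := fun x _ => x
      map_add' := fun _ _ => rfl
      map_smul' := fun _ _ => rfl }
  naturality S T f := by ext x; rfl

def FIMod.truncMap (n : ℕ) {X Y : FIMod} (i : X ⟶ Y) : X.trunc n ⟶ Y.trunc n where
  app S := ModuleCat.ofHom
    { toFun := fun φ h => i.app S (φ h)
      map_add' := by intro x y; funext h; simp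
      map_smul' := by intro x y; funext h; simp }
  naturality S T f := by
    ext φ; funext h
    exact NatTrans.naturality_apply i f _

open Classical in
noncomputable def FIMod.fromTrunc (n : ℕ) {X I : FIMod}
    (hI : ∀ S : FIObj, n ≤ Fintype.card S.α → ∀ x : (I.obj S), x = 0) (f : X ⟶ I) :
    X.trunc n ⟶ I where
  app S := ModuleCat.ofHom
    { toFun := fun φ => if h : Fintype.card S.α < n then f.app S (φ ⟨h⟩) else 0
      map_add' := by intro x y; split_ifs <;> simp
      map_smul' := by intro x y; split_ifs <;> simp }
  naturality S T g := by
    ext φ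
    by_cases h : Fintype.card T.α < n
    · have h' := lt_of_le_of_lt (FIObj.card_le g) h
      have := NatTrans.naturality_apply f g (φ ⟨h'⟩)
      refine (dif_pos h).trans (this.trans ?_)
      have h2 : (if h : Fintype.card S.α < n then f.app S (φ ⟨h⟩) else 0) = f.app S (φ ⟨h'⟩) :=
        dif_pos h'
      exact congrArg (I.map g) h2.symm
    · exact (hI T (not_lt.mp h) _).trans (hI T (not_lt.mp h) _).symm

/-- A finite length FI-module that is injective in the category of
finite length FI-modules is injective in the category of finitely generated FI-modules. -/
theorem finite_length_injective_is_injective_in_fg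
    (I : FIMod) (hlen : FIMod.FiniteLength I)
    (hinj : ∀ (X Y : FIMod), FIMod.FiniteLength X → FIMod.FiniteLength Y →
      ∀ (i : X ⟶ Y), (∀ S : FIObj, Function.Injective (i.app S)) →
        ∀ f : X ⟶ I, ∃ g : Y ⟶ I, i ≫ g = f) :
    ∀ (X Y : FIMod), FIMod.FG X → FIMod.FG Y →
      ∀ (i : X ⟶ Y), (∀ S : FIObj, Function.Injective (i.app S)) →
        ∀ f : X ⟶ I, ∃ g : Y ⟶ I, i ≫ g = f := by
  intro X Y hX hY i hi f
  obtain ⟨-, n, hn⟩ := hlen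
  obtain ⟨g, hg⟩ := hinj (X.trunc n) (Y.trunc n) (FIMod.trunc_finiteLength n hX)
    (FIMod.trunc_finiteLength n hY) (FIMod.truncMap n i)
    (fun S a b hab => funext fun h => hi S (congrFun hab h)) (FIMod.fromTrunc n hn f)
  refine ⟨Y.toTrunc n ≫ g, ?_⟩
  have h1 : i ≫ Y.toTrunc n = X.toTrunc n ≫ FIMod.truncMap n i := by
    ext S x; rfl
  rw [← Category.assoc, h1, Category.assoc, hg]
  ext S x
  by_cases h : Fintype.card S.α < n
  · exact dif_pos h
  · exact (hn S (not_lt.mp h) _).trans (hn S (not_lt.mp h) _).symm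
end
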